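/- Let (Δ_1,…,Δ_d) be pairwise disjoint closed intervals and (μ_1,…,μ_d) positive compactly supported Borel measures with μ_i ∈ Sz(Δ_i) for each i. Then there exists a unique collection of functions (S_1,…,S_d) such that each S_i is a conjugate-symmetric outer function in the Hardy space H²(D_{Δ_i}) with S_i(∞) > 0, and for almost every x ∈ Δ_i and each i ∈ {1,…,d}: |S_{i±}(x)|² · ∏_{j≠i} S_j(x) = v_{Δ_i}(x), where S_{i±} denote the non-tangential boundary values of S_i from above and below Δ_i. -/

import Mathlib

open MeasureTheory Set Filter Topology Polynomial

noncomputable section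

/-- The arcsine distribution `dω_[a,b](x) = dx/(π √((x−a)(b−x)))` on `[a,b]`. -/
def arcsineMeasure (a b : ℝ) : Measure ℝ :=
  (volume.restrict (Set.Icc a b)).withDensity
    fun x => ENNReal.ofReal (1 / (Real.pi * Real.sqrt ((x - a) * (b - x))))

/-- The branch of `√((z−a)(z−b))` holomorphic off `[a,b]` with `w(z) = z + O(1)` at `∞`. -/
def wBranch (a b : ℝ) (z : ℂ) : ℂ :=
  (z - a) * Complex.exp ((1 / 2 : ℂ) * Complex.log ((z - b) / (z - a)))

/-- Cauchy transform `∫ u(x)/(z−x) dω_[a,b](x)`. -/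
def cauchyT (a b : ℝ) (u : ℝ → ℝ) (z : ℂ) : ℂ :=
  ∫ x, (u x : ℂ) / (z - (x : ℂ)) ∂(arcsineMeasure a b)

/-- `H_Δ u`, the harmonic extension of `u` off `Δ = [a,b]`. -/
def harmExt (a b : ℝ) (u : ℝ → ℝ) (z : ℂ) : ℝ :=
  (wBranch a b z * cauchyT a b u z).re

/-- The outer function `Ω_Δ(f,z) := exp( w_Δ(z) ∫ log f(x)/(z−x) dω_Δ(x) )`. -/
def OmegaFun (a b : ℝ) (f : ℝ → ℝ) (z : ℂ) : ℂ :=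
  Complex.exp (wBranch a b z * cauchyT a b (fun x => Real.log (f x)) z)

/-- The value of `Ω_Δ(f,·)` at infinity: `exp( ∫ log f dω_Δ )`. -/
def OmegaInf (a b : ℝ) (f : ℝ → ℝ) : ℝ :=
  Real.exp (∫ x, Real.log (f x) ∂(arcsineMeasure a b))

/-- Radon–Nikodym derivative `μ′` of `μ` with respect to Lebesgue measure. -/
def lebDeriv (μ : Measure ℝ) (x : ℝ) : ℝ := (μ.rnDeriv volume x).toReal

/-- `v_Δ(x) = π μ′(x) √((x−a)(b−x))`, the density of `μ|_Δ` w.r.t. the arcsine law. -/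
def vDens (μ : Measure ℝ) (a b : ℝ) (x : ℝ) : ℝ :=
  Real.pi * lebDeriv μ x * Real.sqrt ((x - a) * (b - x))

/-- Szegő function `G(e^h μ|_[a,b], z)`. -/
def szegoG (μ : Measure ℝ) (a b : ℝ) (h : ℝ → ℝ) (z : ℂ) : ℂ :=
  OmegaFun a b (fun x => Real.sqrt (Real.exp (h x) * vDens μ a b x)) z

/-- Szegő function `G(e^h μ|_[a,b], ·)` at infinity. -/
def szegoGInf (μ : Measure ℝ) (a b : ℝ) (h : ℝ → ℝ) : ℝ :=
  OmegaInf a b fun x => Real.sqrt (Real.exp (h x) * vDens μ a b x)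

/-- Support of a measure on `ℝ`. -/
def msupp (μ : Measure ℝ) : Set ℝ := {x | ∀ ε > 0, 0 < μ (Metric.ball x ε)}

def suppInf (μ : Measure ℝ) : ℝ := sInf (msupp μ)
def suppSup (μ : Measure ℝ) : ℝ := sSup (msupp μ)

/-- `Δ(μ)`, the convex hull of the support of `μ`. -/
def convHullSupp (μ : Measure ℝ) : Set ℝ := Set.Icc (suppInf μ) (suppSup μ)

/-- Logarithmic potential `V^ω(x) = −∫ log|x−t| dω(t)`. -/
def logPot (ω : Measure ℝ) (x : ℝ) : ℝ := -∫ t, Real.log |x - t| ∂ω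

/-- The Szegő condition `μ ∈ Sz([a,b])`. -/
def SzCond (μ : Measure ℝ) (a b : ℝ) : Prop :=
  Integrable (fun x => Real.log (lebDeriv μ x)) (arcsineMeasure a b)

/-- The increasing affine map of `[a,b]` onto `[c,d]`. -/
def affIcc (a b c d : ℝ) (x : ℝ) : ℝ := c + ((d - c) / (b - a)) * (x - a)

/-- The uniform Szegő condition `μ ∈ USz([a,b])`. -/
def USzCond (μ : Measure ℝ) (a b : ℝ) : Prop :=
  SzCond μ a b ∧
  ∀ A B : ℕ → ℝ, (∀ n, A n < B n) → (∀ n, Set.Icc (A n) (B n) ⊆ convHullSupp μ) →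
    Tendsto A atTop (𝓝 a) → Tendsto B atTop (𝓝 b) →
    (∀ᶠ n in atTop, SzCond μ (A n) (B n)) ∧
    Tendsto (fun n => ∫ x,
        |Real.log (lebDeriv μ x) - Real.log (lebDeriv μ (affIcc a b (A n) (B n) x))|
          ∂(arcsineMeasure a b)) atTop (𝓝 0)

/-- `P` is the `n`-th monic orthogonal polynomial with respect to `ν`. -/
def IsMonicOP (ν : Measure ℝ) (n : ℕ) (P : Polynomial ℝ) : Prop :=
  P.Monic ∧ P.natDegree = n ∧ ∀ k < n, ∫ x, x ^ k * P.eval x ∂ν = 0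

/-- The weighted measure `e^θ μ`. -/
def expWt (μ : Measure ℝ) (θ : ℝ → ℝ) : Measure ℝ :=
  μ.withDensity fun x => ENNReal.ofReal (Real.exp (θ x))

/-- An Angelesco system of `d` measures, with `Δ(μ_i) = [lo i, hi i]`. -/
structure Angelesco (d : ℕ) (μ : Fin d → Measure ℝ) (lo hi : Fin d → ℝ) : Prop where
  two_le : 2 ≤ d
  bounded : ∀ i, Bornology.IsBounded (msupp (μ i))
  infinite : ∀ i, (msupp (μ i)).Infinite
  lo_eq : ∀ i, lo i = suppInf (μ i)
  hi_eq : ∀ i, hi i = suppSup (μ i)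
  sep : ∀ i j, i < j → hi i < lo j

/-- The vector equilibrium measure `(ω_1,…,ω_d)` with parameter `c`,
with `supp ω_i = [A i, B i] ⊆ [lo i, hi i]` and masses `c i`. -/
structure VecEquil (d : ℕ) (lo hi : Fin d → ℝ) (c : Fin d → ℝ)
    (ω : Fin d → Measure ℝ) (A B : Fin d → ℝ) : Prop where
  endpoints : ∀ i, lo i ≤ A i ∧ A i < B i ∧ B i ≤ hi i
  supp : ∀ i, msupp (ω i) = Set.Icc (A i) (B i)
  mass : ∀ i, ω i Set.univ = ENNReal.ofReal (c i)
  equil : ∀ j, ∃ ℓ : ℝ,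
    (∀ x ∈ Set.Icc (A j) (B j), logPot (ω j) x + ∑ i, logPot (ω i) x = ℓ) ∧
    (∀ x ∈ Set.Icc (lo j) (hi j) \ Set.Icc (A j) (B j),
        ℓ < logPot (ω j) x + ∑ i, logPot (ω i) x)

/-- The vector `(S_1,…,S_d)` of conjugate-symmetric outer functions in `H²(D_{Δ_i})`,
positive at infinity, with boundary moduli `g_i` satisfying
`|S_{i±}|² ∏_{j≠i} S_j = v_i` a.e. on `Δ_i` (outer functions positive at infinity are
recovered from their boundary moduli by `S_i = Ω_{Δ_i}(g_i, ·)`). -/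
def IsSzegoVector (d : ℕ) (A B : Fin d → ℝ) (v : Fin d → ℝ → ℝ)
    (g : Fin d → ℝ → ℝ) (S : Fin d → ℂ → ℂ) : Prop :=
  (∀ i x, 0 ≤ g i x) ∧
  (∀ i, Integrable (fun x => Real.log (g i x)) (arcsineMeasure (A i) (B i))) ∧
  (∀ i, S i = fun z => OmegaFun (A i) (B i) (g i) z) ∧
  (∀ i, ∀ᵐ x ∂(arcsineMeasure (A i) (B i)),
    (g i x) ^ 2 * ∏ j ∈ Finset.univ.erase i, (S j (x : ℂ)).re = v i x)

/-- The operator `ℋ` with component `i` equal to `−(1/2) Σ_{j≠i} H_{[A j, B j]} u_j`. -/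
def calH (d : ℕ) (A B : Fin d → ℝ) (u : Fin d → ℝ → ℝ) (i : Fin d) (x : ℝ) : ℝ :=
  -(1 / 2) * ∑ j ∈ Finset.univ.erase i, harmExt (A j) (B j) (u j) (x : ℂ)

/-- sup norm over `[a,b]`. -/
def supIcc (a b : ℝ) (f : ℝ → ℝ) : ℝ := sSup ((fun x => |f x|) '' Set.Icc a b)

/-- Norm of `C(Δ⃗)`. -/
def vecCNorm (d : ℕ) (A B : Fin d → ℝ) (u : Fin d → ℝ → ℝ) : ℝ :=
  ∑ i, supIcc (A i) (B i) (u i)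

/-- Norm of `C¹(Δ⃗)`. -/
def vecC1Norm (d : ℕ) (A B : Fin d → ℝ) (u : Fin d → ℝ → ℝ) : ℝ :=
  ∑ i, (supIcc (A i) (B i) (u i) +
    supIcc (A i) (B i) (derivWithin (u i) (Set.Icc (A i) (B i))))

/-- membership in `C(Δ⃗)`. -/
def memVecC (d : ℕ) (A B : Fin d → ℝ) (u : Fin d → ℝ → ℝ) : Prop :=
  ∀ i, ContinuousOn (u i) (Set.Icc (A i) (B i))

/-- membership in `C¹(Δ⃗)`. -/
def memVecC1 (d : ℕ) (A B : Fin d → ℝ) (u : Fin d → ℝ → ℝ) : Prop :=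
  ∀ i, ContDiffOn ℝ 1 (u i) (Set.Icc (A i) (B i))

/-- `|w_Δ(x)|` for real `x`. -/
def wAbs (p q x : ℝ) : ℝ := Real.sqrt |(x - p) * (x - q)|

/-- Riemann–Liouville type fractional integral of order 1/2. -/
def fracInt (γ : ℝ) (θ : ℝ → ℝ) (x : ℝ) : ℝ :=
  (Real.sqrt Real.pi)⁻¹ * ∫ t in γ..x, θ t / Real.sqrt |x - t|


/-! ### The arcsine law -/

lemma arc_T_deriv (a b φ : ℝ) :
    HasDerivAt (fun φ : ℝ => a * Real.cos φ ^ 2 + b * Real.sin φ ^ 2)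
      (2 * (b - a) * Real.sin φ * Real.cos φ) φ := by
  have h1 := ((Real.hasDerivAt_cos φ).pow 2).const_mul a
  have h2 := ((Real.hasDerivAt_sin φ).pow 2).const_mul b
  refine HasDerivAt.congr_deriv (h1.add h2) ?_
  simp; ring

lemma arc_T_strictMono {a b : ℝ} (hab : a < b) :
    StrictMonoOn (fun φ : ℝ => a * Real.cos φ ^ 2 + b * Real.sin φ ^ 2) (Icc 0 (Real.pi / 2)) := by
  apply strictMonoOn_of_deriv_pos (convex_Icc _ _) (by fun_prop)
  intro x hx
  rw [interior_Icc] at hx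
  rw [(arc_T_deriv a b x).deriv]
  have h1 : 0 < Real.sin x := Real.sin_pos_of_pos_of_lt_pi hx.1 (by linarith [hx.2, Real.pi_pos])
  have h2 : 0 < Real.cos x := Real.cos_pos_of_mem_Ioo ⟨by linarith [hx.1, Real.pi_pos], hx.2⟩
  have : 0 < b - a := by linarith
  positivity

lemma arc_T_image {a b : ℝ} (hab : a < b) :
    (fun φ : ℝ => a * Real.cos φ ^ 2 + b * Real.sin φ ^ 2) '' (Ioo 0 (Real.pi / 2)) = Ioo a b := by
  have hm := arc_T_strictMono hab
  have hpi := Real.pi_pos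
  have h0 : (0 : ℝ) ≤ Real.pi / 2 := by positivity
  apply Subset.antisymm
  · rintro _ ⟨φ, hφ, rfl⟩
    have h1 := hm (left_mem_Icc.2 h0) (Ioo_subset_Icc_self hφ) hφ.1
    have h2 := hm (Ioo_subset_Icc_self hφ) (right_mem_Icc.2 h0) hφ.2
    simp at h1 h2
    exact ⟨h1, h2⟩
  · have := intermediate_value_Ioo (f := fun φ : ℝ => a * Real.cos φ ^ 2 + b * Real.sin φ ^ 2)
      h0 (by fun_prop)
    simpa using this

lemma arc_T_sqrt {a b φ : ℝ} (hab : a < b) (hφ : φ ∈ Ioo 0 (Real.pi / 2)) :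
    |2 * (b - a) * Real.sin φ * Real.cos φ| *
      (1 / (Real.pi * Real.sqrt (((a * Real.cos φ ^ 2 + b * Real.sin φ ^ 2) - a) *
        (b - (a * Real.cos φ ^ 2 + b * Real.sin φ ^ 2))))) = 2 / Real.pi := by
  have h1 : 0 < Real.sin φ := Real.sin_pos_of_pos_of_lt_pi hφ.1 (by linarith [hφ.2, Real.pi_pos])
  have h2 : 0 < Real.cos φ := Real.cos_pos_of_mem_Ioo ⟨by linarith [hφ.1, Real.pi_pos], hφ.2⟩
  have h3 : 0 < b - a := by linarith
  have h4 : ((a * Real.cos φ ^ 2 + b * Real.sin φ ^ 2) - a) *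
        (b - (a * Real.cos φ ^ 2 + b * Real.sin φ ^ 2)) = ((b - a) * Real.sin φ * Real.cos φ) ^ 2 := by
    have hc : Real.cos φ ^ 2 = 1 - Real.sin φ ^ 2 := by
      have := Real.sin_sq_add_cos_sq φ; linarith
    rw [mul_pow, mul_pow, hc]; ring
  rw [h4, Real.sqrt_sq (by positivity), abs_of_pos (by positivity)]
  have := Real.pi_pos
  field_simp

lemma arc_dens_meas (a b : ℝ) : Measurable
    (fun x : ℝ => ENNReal.ofReal (1 / (Real.pi * Real.sqrt ((x - a) * (b - x))))) := by
  fun_prop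

lemma arc_integrable_iff {E : Type*} [NormedAddCommGroup E] [NormedSpace ℝ E] {a b : ℝ}
    (hab : a < b) (f : ℝ → E) :
    Integrable f (arcsineMeasure a b) ↔
      IntegrableOn (fun φ => f (a * Real.cos φ ^ 2 + b * Real.sin φ ^ 2)) (Ioo 0 (Real.pi / 2)) := by
  unfold arcsineMeasure
  rw [integrable_withDensity_iff_integrable_smul' (arc_dens_meas a b)
    (ae_of_all _ fun _ => ENNReal.ofReal_lt_top)]
  change IntegrableOn _ _ _ ↔ _
  rw [integrableOn_Icc_iff_integrableOn_Ioo, ← arc_T_image hab,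
    integrableOn_image_iff_integrableOn_abs_deriv_smul measurableSet_Ioo
      (fun x _ => (arc_T_deriv a b x).hasDerivWithinAt)
      ((arc_T_strictMono hab).injOn.mono Ioo_subset_Icc_self)]
  have : EqOn (fun φ => |2 * (b - a) * Real.sin φ * Real.cos φ| •
      (ENNReal.ofReal (1 / (Real.pi * Real.sqrt (((a * Real.cos φ ^ 2 + b * Real.sin φ ^ 2) - a) *
        (b - (a * Real.cos φ ^ 2 + b * Real.sin φ ^ 2)))))).toReal •
        f (a * Real.cos φ ^ 2 + b * Real.sin φ ^ 2))
      (fun φ => (2 / Real.pi) • f (a * Real.cos φ ^ 2 + b * Real.sin φ ^ 2))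
      (Ioo 0 (Real.pi / 2)) := by
    intro φ hφ
    simp only
    rw [ENNReal.toReal_ofReal (by positivity), smul_smul, arc_T_sqrt hab hφ]
  rw [integrableOn_congr_fun this measurableSet_Ioo]
  unfold IntegrableOn
  exact integrable_fun_smul_iff (by have := Real.pi_pos; positivity) _

lemma arc_integral {E : Type*} [NormedAddCommGroup E] [NormedSpace ℝ E] {a b : ℝ}
    (hab : a < b) (f : ℝ → E) :
    ∫ x, f x ∂(arcsineMeasure a b) =
      (2 / Real.pi) • ∫ φ in Ioo 0 (Real.pi / 2), f (a * Real.cos φ ^ 2 + b * Real.sin φ ^ 2) := by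
  unfold arcsineMeasure
  rw [integral_withDensity_eq_integral_toReal_smul (arc_dens_meas a b)
    (ae_of_all _ fun _ => ENNReal.ofReal_lt_top),
    integral_Icc_eq_integral_Ioo, ← arc_T_image hab,
    integral_image_eq_integral_abs_deriv_smul measurableSet_Ioo
      (fun x _ => (arc_T_deriv a b x).hasDerivWithinAt)
      ((arc_T_strictMono hab).injOn.mono Ioo_subset_Icc_self), ← integral_smul]
  apply setIntegral_congr_fun measurableSet_Ioo
  intro φ hφ
  simp only
  rw [ENNReal.toReal_ofReal (by positivity), smul_smul, arc_T_sqrt hab hφ]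

lemma arc_isProb {a b : ℝ} (hab : a < b) : IsProbabilityMeasure (arcsineMeasure a b) := by
  have hi : Integrable (fun _ : ℝ => (1 : ℝ)) (arcsineMeasure a b) := by
    rw [arc_integrable_iff hab]
    exact integrableOn_const (by simp)
  have hf : IsFiniteMeasure (arcsineMeasure a b) := by
    rcases (integrable_const_iff).1 hi with h | h
    · simp at h
    · exact h
  have h1 := arc_integral hab (fun _ : ℝ => (1 : ℝ))
  have hpi := Real.pi_pos
  simp [Measure.real] at h1
  constructor
  have h2 : (arcsineMeasure a b univ).toReal = 1 := by
    rw [h1, ENNReal.toReal_ofReal (by positivity)]; field_simp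
  rw [← ENNReal.ofReal_toReal (measure_ne_top _ _), h2, ENNReal.ofReal_one]

lemma arc_ae_mem (a b : ℝ) : ∀ᵐ t ∂(arcsineMeasure a b), t ∈ Icc a b := by
  unfold arcsineMeasure
  exact (withDensity_absolutelyContinuous _ _).ae_le (ae_restrict_mem measurableSet_Icc)



/-! ### The Poisson type kernel -/

/-- Denominator of the kernel, in terms of the uniformizing variable `ρ`. -/
def kden (a b : ℝ) (ρ : ℂ) (t : ℝ) : ℂ :=
  (((b - t) / (b - a) : ℝ) : ℂ) * ρ⁻¹ + (((t - a) / (b - a) : ℝ) : ℂ) * ρ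

/-- The kernel `w(z)/(z-t)` written with `ρ = √((z-b)/(z-a))`. -/
def kk (a b : ℝ) (ρ : ℂ) (t : ℝ) : ℂ := (kden a b ρ t)⁻¹

lemma re_inv_pos {ρ : ℂ} (hρ : 0 < ρ.re) : 0 < (ρ⁻¹).re := by
  rw [Complex.inv_re]
  have : ρ ≠ 0 := by rintro rfl; simp at hρ
  exact div_pos hρ (Complex.normSq_pos.2 this)

lemma kden_re_ge {a b : ℝ} (hab : a < b) {ρ : ℂ} {δ : ℝ} (h1 : δ ≤ ρ.re) (h2 : δ ≤ (ρ⁻¹).re)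
    {t : ℝ} (ht : t ∈ Icc a b) : δ ≤ (kden a b ρ t).re := by
  unfold kden
  rw [Complex.add_re, Complex.re_ofReal_mul, Complex.re_ofReal_mul]
  have h3 : 0 < b - a := by linarith
  have h4 : 0 ≤ (b - t) / (b - a) := div_nonneg (by linarith [ht.2]) h3.le
  have h5 : 0 ≤ (t - a) / (b - a) := div_nonneg (by linarith [ht.1]) h3.le
  have h6 : (b - t) / (b - a) + (t - a) / (b - a) = 1 := by field_simp; ring
  have h7 := mul_le_mul_of_nonneg_left h2 h4
  have h8 := mul_le_mul_of_nonneg_left h1 h5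
  calc δ = ((b - t) / (b - a) + (t - a) / (b - a)) * δ := by rw [h6, one_mul]
    _ = (b - t) / (b - a) * δ + (t - a) / (b - a) * δ := by ring
    _ ≤ _ := add_le_add h7 h8

lemma kden_re_pos {a b : ℝ} (hab : a < b) {ρ : ℂ} (hρ : 0 < ρ.re)
    {t : ℝ} (ht : t ∈ Icc a b) : 0 < (kden a b ρ t).re :=
  lt_of_lt_of_le (lt_min hρ (re_inv_pos hρ))
    (kden_re_ge hab (min_le_left _ _) (min_le_right _ _) ht)

lemma kden_ne {a b : ℝ} (hab : a < b) {ρ : ℂ} (hρ : 0 < ρ.re)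
    {t : ℝ} (ht : t ∈ Icc a b) : kden a b ρ t ≠ 0 := by
  intro h
  have := kden_re_pos hab hρ ht
  rw [h] at this; simp at this

lemma kk_re_pos {a b : ℝ} (hab : a < b) {ρ : ℂ} (hρ : 0 < ρ.re)
    {t : ℝ} (ht : t ∈ Icc a b) : 0 < (kk a b ρ t).re :=
  re_inv_pos (kden_re_pos hab hρ ht)

lemma kk_norm_le {a b : ℝ} (hab : a < b) {ρ : ℂ} {δ : ℝ} (hδ : 0 < δ) (h1 : δ ≤ ρ.re)
    (h2 : δ ≤ (ρ⁻¹).re) {t : ℝ} (ht : t ∈ Icc a b) : ‖kk a b ρ t‖ ≤ δ⁻¹ := by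
  unfold kk
  rw [norm_inv]
  apply inv_anti₀ hδ
  exact (kden_re_ge hab h1 h2 ht).trans (Complex.re_le_norm _)

lemma kk_meas (a b : ℝ) (ρ : ℂ) : Measurable (kk a b ρ) := by
  unfold kk kden
  fun_prop

lemma kden_hasDerivAt (a b : ℝ) {ρ : ℂ} (hρ : 0 < ρ.re) (t : ℝ) :
    HasDerivAt (fun ρ => kden a b ρ t)
      ((((b - t) / (b - a) : ℝ) : ℂ) * (-(ρ ^ 2)⁻¹) + (((t - a) / (b - a) : ℝ) : ℂ)) ρ := by
  unfold kden
  have h0 : ρ ≠ 0 := by rintro rfl; simp at hρ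
  have h1 := (hasDerivAt_inv h0).const_mul (((b - t) / (b - a) : ℝ) : ℂ)
  have h2 := (hasDerivAt_id ρ).const_mul (((t - a) / (b - a) : ℝ) : ℂ)
  refine HasDerivAt.congr_deriv (h1.add h2) ?_
  simp

/-- Derivative of the kernel in `ρ`. -/
def kk' (a b : ℝ) (ρ : ℂ) (t : ℝ) : ℂ :=
  -((((b - t) / (b - a) : ℝ) : ℂ) * (-(ρ ^ 2)⁻¹) + (((t - a) / (b - a) : ℝ) : ℂ)) *
    (kk a b ρ t) ^ 2

lemma kk_hasDerivAt {a b : ℝ} (hab : a < b) {ρ : ℂ} (hρ : 0 < ρ.re)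
    {t : ℝ} (ht : t ∈ Icc a b) : HasDerivAt (fun ρ => kk a b ρ t) (kk' a b ρ t) ρ := by
  have := (kden_hasDerivAt a b hρ t).fun_inv (kden_ne hab hρ ht)
  refine this.congr_deriv ?_
  unfold kk' kk
  rw [div_eq_mul_inv, inv_pow]

lemma kk'_norm_le {a b : ℝ} (hab : a < b) {ρ : ℂ} {δ : ℝ} (hδ : 0 < δ) (h1 : δ ≤ ρ.re)
    (h2 : δ ≤ (ρ⁻¹).re) {t : ℝ} (ht : t ∈ Icc a b) :
    ‖kk' a b ρ t‖ ≤ ((δ⁻¹) ^ 2 + 1) * (δ⁻¹) ^ 2 := by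
  unfold kk'
  rw [norm_mul, norm_pow, norm_neg]
  have h3 : 0 < b - a := by linarith
  have h4 : 0 ≤ (b - t) / (b - a) := div_nonneg (by linarith [ht.2]) h3.le
  have h5 : 0 ≤ (t - a) / (b - a) := div_nonneg (by linarith [ht.1]) h3.le
  have h6 : (b - t) / (b - a) + (t - a) / (b - a) = 1 := by field_simp; ring
  have h7 : ‖ρ⁻¹‖ ≤ δ⁻¹ := by
    rw [norm_inv]; exact inv_anti₀ hδ (h1.trans (Complex.re_le_norm _))
  gcongr
  · refine (norm_add_le _ _).trans ?_
    rw [norm_mul, norm_neg, ← inv_pow, norm_pow, Complex.norm_real, Complex.norm_real,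
      Real.norm_of_nonneg h4, Real.norm_of_nonneg h5]
    have h8 : ‖ρ⁻¹‖ ^ 2 ≤ δ⁻¹ ^ 2 := by gcongr
    have h9 : 0 ≤ ‖ρ⁻¹‖ ^ 2 := by positivity
    nlinarith
  · exact kk_norm_le hab hδ h1 h2 ht

lemma kk_integral {a b : ℝ} (hab : a < b) {ρ : ℂ} (hρ : 0 < ρ.re) :
    ∫ t, kk a b ρ t ∂(arcsineMeasure a b) = 1 := by
  have hpi := Real.pi_pos
  have h0 : ρ ≠ 0 := by rintro rfl; simp at hρ
  rw [arc_integral hab]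
  have hba : b - a ≠ 0 := by linarith
  have hk : ∀ φ : ℝ, kk a b ρ (a * Real.cos φ ^ 2 + b * Real.sin φ ^ 2) =
      ρ / ((Real.cos φ : ℂ) ^ 2 + ρ ^ 2 * (Real.sin φ : ℂ) ^ 2) := by
    intro φ
    have hc : Real.cos φ ^ 2 = 1 - Real.sin φ ^ 2 := by
      have := Real.sin_sq_add_cos_sq φ; linarith
    have e1 : (b - (a * Real.cos φ ^ 2 + b * Real.sin φ ^ 2)) / (b - a) = Real.cos φ ^ 2 := by
      rw [hc]; field_simp; ring
    have e2 : ((a * Real.cos φ ^ 2 + b * Real.sin φ ^ 2) - a) / (b - a) = Real.sin φ ^ 2 := by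
      rw [hc]; field_simp; ring
    unfold kk kden
    rw [e1, e2]
    push_cast
    have : (Real.cos φ : ℂ) ^ 2 * ρ⁻¹ + (Real.sin φ : ℂ) ^ 2 * ρ =
      ((Real.cos φ : ℂ) ^ 2 + ρ ^ 2 * (Real.sin φ : ℂ) ^ 2) / ρ := by field_simp
    push_cast at this
    rw [this, inv_div]
  simp_rw [hk]
  rw [← integral_Icc_eq_integral_Ioo, integral_Icc_eq_integral_Ioc,
    ← intervalIntegral.integral_of_le (by positivity)]
  -- the numerator and denominator
  have hN : ∀ φ : ℝ, φ ∈ Icc 0 (Real.pi / 2) →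
      ((Real.cos φ : ℂ) + Complex.I * ρ * (Real.sin φ : ℂ)) ∈ Complex.slitPlane := by
    intro φ hφ
    rw [Complex.mem_slitPlane_iff]
    rcases hφ.1.eq_or_lt with h | h
    · left; rw [← h]; simp
    · right
      have : 0 < Real.sin φ := Real.sin_pos_of_pos_of_lt_pi h (by linarith [hφ.2])
      have e : ((Real.cos φ : ℂ) + Complex.I * ρ * (Real.sin φ : ℂ)).im = ρ.re * Real.sin φ := by
        rw [Complex.add_im, Complex.im_mul_ofReal, Complex.ofReal_im]; simp
      rw [e]; positivity
  have hD : ∀ φ : ℝ, φ ∈ Icc 0 (Real.pi / 2) →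
      ((Real.cos φ : ℂ) - Complex.I * ρ * (Real.sin φ : ℂ)) ∈ Complex.slitPlane := by
    intro φ hφ
    rw [Complex.mem_slitPlane_iff]
    rcases hφ.1.eq_or_lt with h | h
    · left; rw [← h]; simp
    · right
      have : 0 < Real.sin φ := Real.sin_pos_of_pos_of_lt_pi h (by linarith [hφ.2])
      have e : ((Real.cos φ : ℂ) - Complex.I * ρ * (Real.sin φ : ℂ)).im = -(ρ.re * Real.sin φ) := by
        rw [Complex.sub_im, Complex.im_mul_ofReal, Complex.ofReal_im]; simp
      rw [e]
      have : 0 < ρ.re * Real.sin φ := by positivity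
      linarith
  have hfac : ∀ φ : ℝ, (Real.cos φ : ℂ) ^ 2 + ρ ^ 2 * (Real.sin φ : ℂ) ^ 2 =
      ((Real.cos φ : ℂ) + Complex.I * ρ * (Real.sin φ : ℂ)) *
      ((Real.cos φ : ℂ) - Complex.I * ρ * (Real.sin φ : ℂ)) := by
    intro φ
    linear_combination (ρ ^ 2 * (Real.sin φ : ℂ) ^ 2) * Complex.I_sq
  have hder : ∀ φ ∈ uIcc 0 (Real.pi / 2), HasDerivAt (fun φ : ℝ => (1 / (2 * Complex.I)) *
      (Complex.log ((Real.cos φ : ℂ) + Complex.I * ρ * (Real.sin φ : ℂ)) -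
       Complex.log ((Real.cos φ : ℂ) - Complex.I * ρ * (Real.sin φ : ℂ))))
      (ρ / ((Real.cos φ : ℂ) ^ 2 + ρ ^ 2 * (Real.sin φ : ℂ) ^ 2)) φ := by
    intro φ hφ
    rw [uIcc_of_le (by positivity)] at hφ
    have c1 := (Real.hasDerivAt_cos φ).ofReal_comp
    have c2 := ((Real.hasDerivAt_sin φ).ofReal_comp).const_mul (Complex.I * ρ)
    have l1 := (c1.fun_add c2).clog_real (hN φ hφ)
    have l2 := (c1.fun_sub c2).clog_real (hD φ hφ)
    refine HasDerivAt.congr_deriv ((l1.sub l2).const_mul (1 / (2 * Complex.I))) ?_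
    have n1 := Complex.slitPlane_ne_zero (hN φ hφ)
    have n2 := Complex.slitPlane_ne_zero (hD φ hφ)
    rw [hfac]
    have hs : (Real.cos φ : ℂ) ^ 2 = 1 - (Real.sin φ : ℂ) ^ 2 := by
      have := Real.sin_sq_add_cos_sq φ
      have h2 : Real.cos φ ^ 2 = 1 - Real.sin φ ^ 2 := by linarith
      exact_mod_cast h2
    simp only [Complex.ofReal_neg]
    have hI := Complex.I_ne_zero
    rw [div_sub_div _ _ n1 n2, ← mul_div_assoc]
    congr 1
    field_simp
    linear_combination (2 * ρ * Complex.I) * hs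
  have hcont : ContinuousOn (fun φ : ℝ => ρ / ((Real.cos φ : ℂ) ^ 2 + ρ ^ 2 * (Real.sin φ : ℂ) ^ 2))
      (uIcc 0 (Real.pi / 2)) := by
    apply ContinuousOn.div continuousOn_const (by fun_prop)
    intro φ hφ
    rw [uIcc_of_le (by positivity)] at hφ
    rw [hfac]
    exact mul_ne_zero (Complex.slitPlane_ne_zero (hN φ hφ)) (Complex.slitPlane_ne_zero (hD φ hφ))
  rw [intervalIntegral.integral_eq_sub_of_hasDerivAt hder hcont.intervalIntegrable]
  have him : 0 < (Complex.I * ρ).im := by simpa using hρ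
  have hlog : Complex.log (-(Complex.I * ρ)) = Complex.log (Complex.I * ρ) - Real.pi * Complex.I := by
    have := Complex.arg_neg_eq_arg_sub_pi_of_im_pos him
    unfold Complex.log
    rw [norm_neg, this]; push_cast; ring
  simp only [Real.cos_pi_div_two, Real.sin_pi_div_two, Real.cos_zero, Real.sin_zero,
    Complex.ofReal_zero, Complex.ofReal_one, mul_one, mul_zero, zero_add, zero_sub, add_zero,
    sub_zero, sub_self, Complex.log_one, hlog, Complex.real_smul]
  have hI := Complex.I_ne_zero
  have hpi' : (Real.pi : ℂ) ≠ 0 := by exact_mod_cast hpi.ne'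
  push_cast
  field_simp
  ring

/-- Complex analytic completion in the uniformizing variable. -/
def Theta (a b : ℝ) (u : ℝ → ℝ) (ρ : ℂ) : ℂ :=
  ∫ t, (u t : ℂ) * kk a b ρ t ∂(arcsineMeasure a b)

lemma Theta_integrable {a b : ℝ} (hab : a < b) {u : ℝ → ℝ} (hu : Integrable u (arcsineMeasure a b))
    {ρ : ℂ} (hρ : 0 < ρ.re) :
    Integrable (fun t => (u t : ℂ) * kk a b ρ t) (arcsineMeasure a b) := by
  have hpos := lt_min hρ (re_inv_pos hρ)
  refine Integrable.mul_bdd (c := (min ρ.re (ρ⁻¹).re)⁻¹) hu.ofReal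
    (kk_meas a b ρ).aestronglyMeasurable ?_
  filter_upwards [arc_ae_mem a b] with t ht
  exact kk_norm_le hab hpos (min_le_left _ _) (min_le_right _ _) ht

lemma Theta_differentiableAt {a b : ℝ} (hab : a < b) {u : ℝ → ℝ}
    (hu : Integrable u (arcsineMeasure a b)) {ρ : ℂ} (hρ : 0 < ρ.re) :
    DifferentiableAt ℂ (Theta a b u) ρ := by
  set δ := min ρ.re (ρ⁻¹).re / 2 with hδ
  have hpos : 0 < min ρ.re (ρ⁻¹).re := lt_min hρ (re_inv_pos hρ)
  have hδ0 : 0 < δ := by positivity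
  have h0 : ρ ≠ 0 := by rintro rfl; simp at hρ
  have hs : {z : ℂ | δ < z.re ∧ δ < (z⁻¹).re} ∈ 𝓝 ρ := by
    have c1 : ContinuousAt (fun z : ℂ => z.re) ρ := Complex.continuous_re.continuousAt
    have c2 : ContinuousAt (fun z : ℂ => (z⁻¹).re) ρ :=
      Complex.continuous_re.continuousAt.comp (continuousAt_inv₀ h0)
    have d1 : δ < ρ.re := by
      have := min_le_left ρ.re (ρ⁻¹).re; rw [hδ]; linarith
    have d2 : δ < (ρ⁻¹).re := by
      have := min_le_right ρ.re (ρ⁻¹).re; rw [hδ]; linarith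
    exact (c1.eventually (lt_mem_nhds d1)).and (c2.eventually (lt_mem_nhds d2))
  have key := hasDerivAt_integral_of_dominated_loc_of_deriv_le (μ := arcsineMeasure a b)
    (F := fun ρ t => (u t : ℂ) * kk a b ρ t) (F' := fun ρ t => (u t : ℂ) * kk' a b ρ t)
    (bound := fun t => ‖u t‖ * (((δ⁻¹) ^ 2 + 1) * (δ⁻¹) ^ 2)) (x₀ := ρ) hs ?_
    (Theta_integrable hab hu hρ) ?_ ?_ ?_ ?_
  · exact key.2.differentiableAt
  · exact Eventually.of_forall fun z =>
      hu.ofReal.aestronglyMeasurable.mul (kk_meas a b z).aestronglyMeasurable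
  · refine hu.ofReal.aestronglyMeasurable.mul (Measurable.aestronglyMeasurable ?_)
    unfold kk'
    have := kk_meas a b ρ
    fun_prop
  · filter_upwards [arc_ae_mem a b] with t ht z hz
    rw [norm_mul, Complex.norm_real]
    gcongr
    exact kk'_norm_le hab hδ0 hz.1.le hz.2.le ht
  · exact hu.norm.mul_const _
  · filter_upwards [arc_ae_mem a b] with t ht z hz
    exact (kk_hasDerivAt hab (hδ0.trans hz.1) ht).const_mul _



/-! ### The uniformizing variable -/

/-- The slit. -/
def cutC (a b : ℝ) : Set ℂ := Complex.ofReal '' Set.Icc a b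

lemma cutC_compact (a b : ℝ) : IsCompact (cutC a b) :=
  isCompact_Icc.image Complex.continuous_ofReal

lemma cutC_closed (a b : ℝ) : IsClosed (cutC a b) := (cutC_compact a b).isClosed

/-- `√((z-b)/(z-a))`. -/
def rr (a b : ℝ) (z : ℂ) : ℂ := Complex.exp ((1 / 2 : ℂ) * Complex.log ((z - b) / (z - a)))

lemma exp_half_log_re_pos {r : ℂ} (hr : r ∈ Complex.slitPlane) :
    0 < (Complex.exp ((1 / 2 : ℂ) * Complex.log r)).re := by
  rw [Complex.exp_re]
  apply mul_pos (Real.exp_pos _)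
  have e : ((1 / 2 : ℂ) * Complex.log r).im = Complex.arg r / 2 := by
    have : (1 / 2 : ℂ) = ((1 / 2 : ℝ) : ℂ) := by push_cast; rfl
    rw [this, Complex.im_ofReal_mul, Complex.log_im]; ring
  rw [e]
  have h1 := Complex.neg_pi_lt_arg r
  have h2 := (Complex.mem_slitPlane_iff_arg.1 hr).1
  have h3 := lt_of_le_of_ne (Complex.arg_le_pi r) h2
  apply Real.cos_pos_of_mem_Ioo
  constructor <;> linarith

lemma exp_half_log_sq {r : ℂ} (hr : r ≠ 0) :
    (Complex.exp ((1 / 2 : ℂ) * Complex.log r)) ^ 2 = r := by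
  rw [← Complex.exp_nat_mul]
  push_cast
  rw [show (2 : ℂ) * (1 / 2 * Complex.log r) = Complex.log r by ring, Complex.exp_log hr]

lemma off_cut {a b : ℝ} {z : ℂ} (hz : z ∉ cutC a b) {t : ℝ} (ht : t ∈ Icc a b) :
    z - (t : ℂ) ≠ 0 := by
  intro h
  exact hz ⟨t, ht, (sub_eq_zero.1 h).symm⟩

lemma ratio_slit {a b : ℝ} (hab : a < b) {z : ℂ} (hz : z ∉ cutC a b) :
    (z - b) / (z - a) ∈ Complex.slitPlane := by
  have ha := off_cut hz (left_mem_Icc.2 hab.le)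
  by_contra hcon
  rw [Complex.mem_slitPlane_iff] at hcon
  push Not at hcon
  obtain ⟨h1, h2⟩ := hcon
  set r : ℝ := ((z - b) / (z - a)).re with hr
  have h3 : (z - b) / (z - a) = (r : ℂ) := Complex.ext rfl h2
  have h4 : z - b = r * (z - a) := by rw [← h3]; field_simp
  have h5 : (0:ℝ) < 1 - r := by linarith
  have h5' : (1 - r : ℂ) ≠ 0 := by exact_mod_cast h5.ne'
  have h6 : z = (((b - r * a) / (1 - r) : ℝ) : ℂ) := by
    push_cast
    rw [eq_div_iff h5']
    linear_combination h4
  apply hz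
  refine ⟨_, ⟨?_, ?_⟩, h6.symm⟩
  · rw [le_div_iff₀ h5]; nlinarith
  · rw [div_le_iff₀ h5]; nlinarith

lemma rr_re_pos {a b : ℝ} (hab : a < b) {z : ℂ} (hz : z ∉ cutC a b) : 0 < (rr a b z).re :=
  exp_half_log_re_pos (ratio_slit hab hz)

lemma rr_sq {a b : ℝ} (hab : a < b) {z : ℂ} (hz : z ∉ cutC a b) :
    (rr a b z) ^ 2 = (z - b) / (z - a) :=
  exp_half_log_sq (Complex.slitPlane_ne_zero (ratio_slit hab hz))

lemma rr_diff {a b : ℝ} (hab : a < b) {z : ℂ} (hz : z ∉ cutC a b) :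
    DifferentiableAt ℂ (rr a b) z := by
  have ha := off_cut hz (left_mem_Icc.2 hab.le)
  have h1 : DifferentiableAt ℂ (fun z : ℂ => (z - b) / (z - a)) z :=
    DifferentiableAt.div (by fun_prop) (by fun_prop) ha
  exact ((h1.clog (ratio_slit hab hz)).const_mul (1 / 2 : ℂ)).cexp

lemma w_eq (a b : ℝ) (z : ℂ) : wBranch a b z = (z - a) * rr a b z := rfl

lemma w_sq {a b : ℝ} (hab : a < b) {z : ℂ} (hz : z ∉ cutC a b) :
    (wBranch a b z) ^ 2 = (z - a) * (z - b) := by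
  have ha := off_cut hz (left_mem_Icc.2 hab.le)
  rw [w_eq, mul_pow, rr_sq hab hz]
  field_simp

lemma w_kk {a b : ℝ} (hab : a < b) {z : ℂ} (hz : z ∉ cutC a b) {t : ℝ} (ht : t ∈ Icc a b) :
    wBranch a b z / (z - t) = kk a b (rr a b z) t := by
  have ha := off_cut hz (left_mem_Icc.2 hab.le)
  have htz := off_cut hz ht
  have hr := rr_re_pos hab hz
  have hr0 : rr a b z ≠ 0 := by intro h; rw [h] at hr; simp at hr
  have hsq := rr_sq hab hz
  rw [eq_div_iff ha] at hsq
  have hba : (b : ℂ) - a ≠ 0 := by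
    have : b - a ≠ 0 := by linarith
    exact_mod_cast this
  have hw : wBranch a b z ≠ 0 := mul_ne_zero ha hr0
  have key : kden a b (rr a b z) t = (z - t) / wBranch a b z := by
    rw [eq_div_iff hw, w_eq]
    unfold kden
    push_cast
    field_simp
    linear_combination (t - a : ℂ) * hsq
  unfold kk
  rw [key, inv_div]

lemma wc_eq {a b : ℝ} (hab : a < b) (u : ℝ → ℝ) {z : ℂ} (hz : z ∉ cutC a b) :
    wBranch a b z * cauchyT a b u z = Theta a b u (rr a b z) := by
  unfold cauchyT Theta
  rw [← integral_const_mul]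
  apply integral_congr_ae
  filter_upwards [arc_ae_mem a b] with t ht
  rw [← w_kk hab hz ht]; ring

lemma harm_theta {a b : ℝ} (hab : a < b) (u : ℝ → ℝ) {z : ℂ} (hz : z ∉ cutC a b) :
    harmExt a b u z = (Theta a b u (rr a b z)).re := by
  unfold harmExt; rw [wc_eq hab u hz]

lemma re_integrable {a b : ℝ} (hab : a < b) {u : ℝ → ℝ} (hu : Integrable u (arcsineMeasure a b))
    {ρ : ℂ} (hρ : 0 < ρ.re) :
    Integrable (fun t => u t * (kk a b ρ t).re) (arcsineMeasure a b) := by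
  have := (Theta_integrable hab hu hρ).re
  refine this.congr (ae_of_all _ fun t => ?_)
  simp

lemma Theta_re {a b : ℝ} (hab : a < b) {u : ℝ → ℝ} (hu : Integrable u (arcsineMeasure a b))
    {ρ : ℂ} (hρ : 0 < ρ.re) :
    (Theta a b u ρ).re = ∫ t, u t * (kk a b ρ t).re ∂(arcsineMeasure a b) := by
  unfold Theta
  have := Complex.reCLM.integral_comp_comm (Theta_integrable hab hu hρ)
  simp only [Complex.reCLM_apply, Complex.re_ofReal_mul] at this
  rw [this]

lemma Theta_re_mono {a b : ℝ} (hab : a < b) {u v : ℝ → ℝ} (hu : Integrable u (arcsineMeasure a b))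
    (hv : Integrable v (arcsineMeasure a b)) (huv : ∀ᵐ t ∂(arcsineMeasure a b), u t ≤ v t)
    {ρ : ℂ} (hρ : 0 < ρ.re) : (Theta a b u ρ).re ≤ (Theta a b v ρ).re := by
  rw [Theta_re hab hu hρ, Theta_re hab hv hρ]
  apply integral_mono_ae (re_integrable hab hu hρ) (re_integrable hab hv hρ)
  filter_upwards [arc_ae_mem a b, huv] with t ht h
  exact mul_le_mul_of_nonneg_right h (kk_re_pos hab hρ ht).le

lemma Theta_add {a b : ℝ} (hab : a < b) {u v : ℝ → ℝ} (hu : Integrable u (arcsineMeasure a b))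
    (hv : Integrable v (arcsineMeasure a b)) {ρ : ℂ} (hρ : 0 < ρ.re) :
    Theta a b (fun t => u t + v t) ρ = Theta a b u ρ + Theta a b v ρ := by
  unfold Theta
  rw [← integral_add (Theta_integrable hab hu hρ) (Theta_integrable hab hv hρ)]
  congr 1; funext t; push_cast; ring

lemma Theta_smul (a b : ℝ) (c : ℝ) (u : ℝ → ℝ) (ρ : ℂ) :
    Theta a b (fun t => c * u t) ρ = c * Theta a b u ρ := by
  unfold Theta
  rw [← integral_const_mul]
  congr 1; funext t; push_cast; ring

lemma Theta_const {a b : ℝ} (hab : a < b) (c : ℝ) {ρ : ℂ} (hρ : 0 < ρ.re) :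
    Theta a b (fun _ => c) ρ = c := by
  unfold Theta
  rw [integral_const_mul, kk_integral hab hρ, mul_one]

lemma Theta_congr {a b : ℝ} {u v : ℝ → ℝ} (huv : u =ᵐ[arcsineMeasure a b] v) (ρ : ℂ) :
    Theta a b u ρ = Theta a b v ρ := by
  unfold Theta
  apply integral_congr_ae
  filter_upwards [huv] with t ht
  rw [ht]

/-! ### Consequences for the harmonic extension -/

lemma harm_mono {a b : ℝ} (hab : a < b) {u v : ℝ → ℝ} (hu : Integrable u (arcsineMeasure a b))
    (hv : Integrable v (arcsineMeasure a b)) (huv : ∀ᵐ t ∂(arcsineMeasure a b), u t ≤ v t)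
    {z : ℂ} (hz : z ∉ cutC a b) : harmExt a b u z ≤ harmExt a b v z := by
  rw [harm_theta hab u hz, harm_theta hab v hz]
  exact Theta_re_mono hab hu hv huv (rr_re_pos hab hz)

lemma harm_add {a b : ℝ} (hab : a < b) {u v : ℝ → ℝ} (hu : Integrable u (arcsineMeasure a b))
    (hv : Integrable v (arcsineMeasure a b)) {z : ℂ} (hz : z ∉ cutC a b) :
    harmExt a b (fun t => u t + v t) z = harmExt a b u z + harmExt a b v z := by
  rw [harm_theta hab _ hz, harm_theta hab u hz, harm_theta hab v hz,
    Theta_add hab hu hv (rr_re_pos hab hz), Complex.add_re]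

lemma harm_smul {a b : ℝ} (hab : a < b) (c : ℝ) (u : ℝ → ℝ) {z : ℂ} (hz : z ∉ cutC a b) :
    harmExt a b (fun t => c * u t) z = c * harmExt a b u z := by
  rw [harm_theta hab _ hz, harm_theta hab u hz, Theta_smul, Complex.re_ofReal_mul]

lemma harm_const {a b : ℝ} (hab : a < b) (c : ℝ) {z : ℂ} (hz : z ∉ cutC a b) :
    harmExt a b (fun _ => c) z = c := by
  rw [harm_theta hab _ hz, Theta_const hab c (rr_re_pos hab hz), Complex.ofReal_re]

lemma harm_congr {a b : ℝ} {u v : ℝ → ℝ} (huv : u =ᵐ[arcsineMeasure a b] v) (z : ℂ) :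
    harmExt a b u z = harmExt a b v z := by
  unfold harmExt cauchyT
  congr 2
  apply integral_congr_ae
  filter_upwards [huv] with t ht
  rw [ht]

lemma harm_sub {a b : ℝ} (hab : a < b) {u v : ℝ → ℝ} (hu : Integrable u (arcsineMeasure a b))
    (hv : Integrable v (arcsineMeasure a b)) {z : ℂ} (hz : z ∉ cutC a b) :
    harmExt a b (fun t => u t - v t) z = harmExt a b u z - harmExt a b v z := by
  have h := harm_add hab hu (hv.const_mul (-1)) hz
  rw [harm_smul hab (-1) v hz] at h
  rw [sub_eq_add_neg, ← neg_one_mul, ← h]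
  congr 1; funext t; ring

lemma harm_nonneg {a b : ℝ} (hab : a < b) {u : ℝ → ℝ} (hu : Integrable u (arcsineMeasure a b))
    (h0 : ∀ t, 0 ≤ u t) {z : ℂ} (hz : z ∉ cutC a b) : 0 ≤ harmExt a b u z := by
  have := harm_mono hab (integrable_zero _ _ _) hu (ae_of_all _ h0) hz
  rwa [show (harmExt a b 0 z) = 0 from harm_const hab 0 hz] at this

/-- The analytic completion of the harmonic extension. -/
def Th (a b : ℝ) (u : ℝ → ℝ) (z : ℂ) : ℂ := Theta a b u (rr a b z)

lemma Th_diff {a b : ℝ} (hab : a < b) {u : ℝ → ℝ} (hu : Integrable u (arcsineMeasure a b))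
    {z : ℂ} (hz : z ∉ cutC a b) : DifferentiableAt ℂ (Th a b u) z :=
  (Theta_differentiableAt hab hu (rr_re_pos hab hz)).comp z (rr_diff hab hz)

lemma harm_contAt {a b : ℝ} (hab : a < b) {u : ℝ → ℝ} (hu : Integrable u (arcsineMeasure a b))
    {z : ℂ} (hz : z ∉ cutC a b) : ContinuousAt (harmExt a b u) z := by
  have h1 : ContinuousAt (fun z => (Th a b u z).re) z :=
    Complex.continuous_re.continuousAt.comp (Th_diff hab hu hz).continuousAt
  refine h1.congr ?_
  filter_upwards [(cutC_closed a b).isOpen_compl.mem_nhds hz] with y hy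
  exact (harm_theta hab u hy).symm

/-! ### The chart at infinity -/

/-- `rr` in the chart `ζ = 1/z`. -/
def rrI (a b : ℝ) (ζ : ℂ) : ℂ :=
  Complex.exp ((1 / 2 : ℂ) * Complex.log ((1 - ζ * b) / (1 - ζ * a)))

lemma rrI_eq (a b : ℝ) {ζ : ℂ} (h : ζ ≠ 0) : rr a b ζ⁻¹ = rrI a b ζ := by
  unfold rr rrI
  congr 3
  have h1 : ζ⁻¹ - b = ζ⁻¹ * (1 - ζ * b) := by field_simp
  have h2 : ζ⁻¹ - a = ζ⁻¹ * (1 - ζ * a) := by field_simp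
  rw [h1, h2, mul_div_mul_left _ _ (inv_ne_zero h)]

lemma rrI_zero (a b : ℝ) : rrI a b 0 = 1 := by simp [rrI]

lemma rrI_good (a b : ℝ) : ∀ᶠ ζ in 𝓝 (0 : ℂ),
    0 < (rrI a b ζ).re ∧ DifferentiableAt ℂ (rrI a b) ζ := by
  have h1 : ∀ᶠ ζ : ℂ in 𝓝 (0 : ℂ), (1 - ζ * a) ≠ 0 := by
    have : ContinuousAt (fun ζ : ℂ => 1 - ζ * a) 0 := by fun_prop
    exact this.eventually_ne (by simp)
  have h2 : ∀ᶠ ζ : ℂ in 𝓝 (0 : ℂ), (1 - ζ * b) / (1 - ζ * a) ∈ Complex.slitPlane := by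
    have : ContinuousAt (fun ζ : ℂ => (1 - ζ * b) / (1 - ζ * a)) 0 := by
      apply ContinuousAt.div (by fun_prop) (by fun_prop) (by simp)
    apply this.eventually_mem
    apply Complex.isOpen_slitPlane.mem_nhds
    simp
  filter_upwards [h1, h2] with ζ g1 g2
  refine ⟨exp_half_log_re_pos g2, ?_⟩
  have h1 : DifferentiableAt ℂ (fun ζ : ℂ => (1 - ζ * b) / (1 - ζ * a)) ζ :=
    DifferentiableAt.div (by fun_prop) (by fun_prop) g1
  exact ((h1.clog g2).const_mul (1 / 2 : ℂ)).cexp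

/-! ### Reality on the real axis -/

lemma wc_real {a b : ℝ} (hab : a < b) (u : ℝ → ℝ) {x : ℝ} (hx : x ∉ Icc a b) :
    wBranch a b x * cauchyT a b u x = ((harmExt a b u x : ℝ) : ℂ) := by
  have hr : 0 ≤ (x - b) / (x - a) := by
    rw [mem_Icc, not_and_or] at hx
    rcases hx with h | h
    · exact div_nonneg_of_nonpos (by linarith) (by linarith)
    · exact div_nonneg (by linarith) (by linarith)
  have h1 : ∃ w : ℝ, wBranch a b x = w := by
    refine ⟨(x - a) * Real.exp (1 / 2 * Real.log ((x - b) / (x - a))), ?_⟩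
    unfold wBranch
    push_cast [Complex.ofReal_log hr]
    rfl
  have h2 : ∃ c : ℝ, cauchyT a b u x = c := by
    refine ⟨∫ t, u t / (x - t) ∂(arcsineMeasure a b), ?_⟩
    unfold cauchyT
    rw [← integral_complex_ofReal]
    congr 1; funext t; push_cast; rfl
  obtain ⟨w, hw⟩ := h1
  obtain ⟨c, hc⟩ := h2
  unfold harmExt
  rw [hw, hc, ← Complex.ofReal_mul, Complex.ofReal_re]

lemma Omega_real {a b : ℝ} (hab : a < b) (g : ℝ → ℝ) {x : ℝ} (hx : x ∉ Icc a b) :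
    (OmegaFun a b g x).re = Real.exp (harmExt a b (fun t => Real.log (g t)) x) := by
  unfold OmegaFun
  rw [wc_real hab _ hx, Complex.exp_ofReal_re]

lemma ofReal_notMem_cut {a b x : ℝ} (hx : x ∉ Icc a b) : (x : ℂ) ∉ cutC a b := by
  rintro ⟨y, hy, h⟩
  rw [Complex.ofReal_inj] at h
  exact hx (h ▸ hy)



/-! ### Boundary behaviour -/

lemma arc_integrable_cont {a b : ℝ} (hab : a < b) {f : ℝ → ℝ} (hf : ContinuousOn f (Icc a b)) :
    Integrable f (arcsineMeasure a b) := by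
  have := arc_isProb hab
  obtain ⟨C, hC⟩ := isCompact_Icc.exists_bound_of_continuousOn hf
  have hm : AEStronglyMeasurable f (arcsineMeasure a b) := by
    have h1 : AEStronglyMeasurable f (volume.restrict (Icc a b)) :=
      hf.aestronglyMeasurable measurableSet_Icc
    exact h1.mono_ac (withDensity_absolutelyContinuous _ _)
  refine Integrable.of_bound hm C ?_
  filter_upwards [arc_ae_mem a b] with t ht
  exact hC t ht

lemma poly_rep {a b : ℝ} (hab : a < b) (p : ℝ[X]) : ∃ q : ℝ[X], ∀ z : ℂ, z ∉ cutC a b →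
    wBranch a b z * cauchyT a b (fun t => p.eval t) z =
      (p.map Complex.ofRealHom).eval z - wBranch a b z * (q.map Complex.ofRealHom).eval z := by
  induction p using Polynomial.induction_on with
  | C c =>
    refine ⟨0, fun z hz => ?_⟩
    rw [wc_eq hab _ hz]
    simp only [eval_C]
    rw [Theta_const hab c (rr_re_pos hab hz)]
    simp
  | add p1 p2 h1 h2 =>
    obtain ⟨q1, h1⟩ := h1
    obtain ⟨q2, h2⟩ := h2
    refine ⟨q1 + q2, fun z hz => ?_⟩
    have e1 := h1 z hz
    have e2 := h2 z hz
    rw [wc_eq hab _ hz] at e1 e2 ⊢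
    simp only [eval_add]
    rw [Theta_add hab (arc_integrable_cont hab p1.continuous.continuousOn)
      (arc_integrable_cont hab p2.continuous.continuousOn) (rr_re_pos hab hz), e1, e2]
    simp only [Polynomial.map_add, eval_add]
    ring
  | monomial n c h =>
    obtain ⟨q, h⟩ := h
    set p : ℝ[X] := C c * X ^ n with hp
    have hp' : (C c * X ^ (n + 1) : ℝ[X]) = X * p := by rw [hp]; ring
    rw [hp']
    set m : ℝ := ∫ t, p.eval t ∂(arcsineMeasure a b)
    refine ⟨X * q + C m, fun z hz => ?_⟩
    have hi := Theta_integrable hab (arc_integrable_cont hab p.continuous.continuousOn)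
      (rr_re_pos hab hz)
    have e : cauchyT a b (fun t => (X * p).eval t) z = z * cauchyT a b (fun t => p.eval t) z - m := by
      have hi0 : Integrable (fun t => ((p.eval t : ℝ) : ℂ)) (arcsineMeasure a b) :=
        (arc_integrable_cont hab p.continuous.continuousOn).ofReal
      have hw : wBranch a b z ≠ 0 := by
        intro h0
        have := w_sq hab hz
        rw [h0] at this
        have := mul_ne_zero (off_cut hz (left_mem_Icc.2 hab.le)) (off_cut hz (right_mem_Icc.2 hab.le))
        simp_all
      have hi1 : Integrable (fun t => ((p.eval t : ℝ) : ℂ) / (z - t)) (arcsineMeasure a b) := by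
        refine (hi.const_mul (wBranch a b z)⁻¹).congr ?_
        filter_upwards [arc_ae_mem a b] with t ht
        rw [← w_kk hab hz ht]
        field_simp
      unfold cauchyT
      rw [← integral_complex_ofReal, ← integral_const_mul, ← integral_sub (hi1.const_mul z) hi0]
      apply integral_congr_ae
      filter_upwards [arc_ae_mem a b] with t ht
      have := off_cut hz ht
      simp only [eval_mul, eval_X]
      push_cast
      field_simp
      ring
    rw [e, mul_sub, mul_left_comm, h z hz]
    simp only [Polynomial.map_add, Polynomial.map_mul, map_X, map_C, eval_add, eval_mul, eval_X,
      eval_C]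
    simp only [Complex.ofRealHom_eq_coe]
    ring

lemma poly_real_tendsto (p : ℝ[X]) (x : ℝ) (s : Set ℂ) :
    Tendsto (fun z : ℂ => (p.map Complex.ofRealHom).eval z) (𝓝[s] (x : ℂ)) (𝓝 ((p.eval x : ℝ) : ℂ)) := by
  have h := (p.map Complex.ofRealHom).continuous.tendsto (x : ℂ)
  have e : (p.map Complex.ofRealHom).eval (x : ℂ) = ((p.eval x : ℝ) : ℂ) := by
    have := Polynomial.eval_map_apply (p := p) (f := Complex.ofRealHom) x
    simpa using this
  rw [e] at h
  exact h.mono_left nhdsWithin_le_nhds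

lemma harm_poly_tendsto {a b : ℝ} (hab : a < b) (p : ℝ[X]) {x : ℝ} (hx : x ∈ Icc a b) :
    Tendsto (harmExt a b (fun t => p.eval t)) (𝓝[(cutC a b)ᶜ] (x : ℂ)) (𝓝 (p.eval x)) := by
  obtain ⟨q, hq⟩ := poly_rep hab p
  have hp := poly_real_tendsto p x (cutC a b)ᶜ
  have hqt := poly_real_tendsto q x (cutC a b)ᶜ
  set s : ℝ := (x - a) * (b - x) with hs
  have hs0 : 0 ≤ s := mul_nonneg (by linarith [hx.1]) (by linarith [hx.2])
  have hw2 : Tendsto (fun z => (wBranch a b z) ^ 2) (𝓝[(cutC a b)ᶜ] (x : ℂ)) (𝓝 ((-s : ℝ) : ℂ)) := by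
    have h1 : Tendsto (fun z : ℂ => (z - a) * (z - b)) (𝓝[(cutC a b)ᶜ] (x : ℂ))
        (𝓝 (((x : ℂ) - a) * (x - b))) := by
      refine Tendsto.mono_left (Continuous.tendsto (f := fun z : ℂ => (z - a) * (z - b))
        (by fun_prop) _) nhdsWithin_le_nhds
    have e : ((x : ℂ) - a) * (x - b) = ((-s : ℝ) : ℂ) := by rw [hs]; push_cast; ring
    rw [e] at h1
    refine h1.congr' ?_
    filter_upwards [self_mem_nhdsWithin] with z hz
    exact (w_sq hab hz).symm
  have hn := hw2.norm
  have hre := (Complex.continuous_re.tendsto _).comp hw2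
  rw [Complex.norm_real, Real.norm_eq_abs, abs_neg, abs_of_nonneg hs0] at hn
  rw [Complex.ofReal_re] at hre
  have key : ∀ w : ℂ, w.re ^ 2 = (‖w ^ 2‖ + (w ^ 2).re) / 2 ∧
      w.im ^ 2 = (‖w ^ 2‖ - (w ^ 2).re) / 2 := by
    intro w
    have : ‖w ^ 2‖ = w.re * w.re + w.im * w.im := by
      rw [norm_pow, ← Complex.normSq_eq_norm_sq, Complex.normSq_apply]
    rw [this]
    have e2 : (w ^ 2).re = w.re * w.re - w.im * w.im := by rw [sq, Complex.mul_re]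
    rw [e2]
    constructor <;> ring
  have hwre : Tendsto (fun z => |(wBranch a b z).re|) (𝓝[(cutC a b)ᶜ] (x : ℂ)) (𝓝 0) := by
    have h1 := ((hn.add hre).div_const 2).sqrt
    rw [add_neg_cancel, zero_div, Real.sqrt_zero] at h1
    refine h1.congr fun z => ?_
    simp only [Function.comp]
    rw [← (key _).1, Real.sqrt_sq_eq_abs]
  have hwim : Tendsto (fun z => |(wBranch a b z).im|) (𝓝[(cutC a b)ᶜ] (x : ℂ)) (𝓝 (√s)) := by
    have h1 := ((hn.sub hre).div_const 2).sqrt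
    rw [show (s - -s) / 2 = s by ring] at h1
    refine h1.congr fun z => ?_
    simp only [Function.comp]
    rw [← (key _).2, Real.sqrt_sq_eq_abs]
  have hqre := (Complex.continuous_re.tendsto _).comp hqt
  have hqim := (Complex.continuous_im.tendsto _).comp hqt
  rw [Complex.ofReal_re] at hqre
  rw [Complex.ofReal_im] at hqim
  have h3 : Tendsto (fun z => (wBranch a b z).re * ((q.map Complex.ofRealHom).eval z).re)
      (𝓝[(cutC a b)ᶜ] (x : ℂ)) (𝓝 0) := by
    rw [tendsto_zero_iff_abs_tendsto_zero]
    have := hwre.mul hqre.abs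
    rw [zero_mul] at this
    refine this.congr fun z => ?_
    simp [Function.comp, abs_mul]
  have h4 : Tendsto (fun z => (wBranch a b z).im * ((q.map Complex.ofRealHom).eval z).im)
      (𝓝[(cutC a b)ᶜ] (x : ℂ)) (𝓝 0) := by
    rw [tendsto_zero_iff_abs_tendsto_zero]
    have := hwim.mul hqim.abs
    rw [abs_zero, mul_zero] at this
    refine this.congr fun z => ?_
    simp [Function.comp, abs_mul]
  have hpre := (Complex.continuous_re.tendsto _).comp hp
  rw [Complex.ofReal_re] at hpre
  have h5 := hpre.sub (h3.sub h4)
  rw [sub_zero, sub_zero] at h5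
  refine h5.congr' ?_
  filter_upwards [self_mem_nhdsWithin] with z hz
  unfold harmExt
  rw [hq z hz, Complex.sub_re, Complex.mul_re]
  rfl

lemma lemmaB {a b : ℝ} (hab : a < b) {f c : ℝ → ℝ} (hf : Integrable f (arcsineMeasure a b))
    (hc : ContinuousOn c (Icc a b)) (hfc : ∀ᵐ t ∂(arcsineMeasure a b), f t ≤ c t)
    {x : ℝ} (hx : x ∈ Icc a b) {ε : ℝ} (hε : 0 < ε) :
    ∀ᶠ z in 𝓝[(cutC a b)ᶜ] (x : ℂ), harmExt a b f z ≤ c x + ε := by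
  obtain ⟨p, hp⟩ := exists_polynomial_near_of_continuousOn a b c hc (ε / 3) (by positivity)
  have ht := harm_poly_tendsto hab (p + C (ε / 3)) hx
  have hlt : (p + C (ε / 3)).eval x < c x + ε := by
    simp only [eval_add, eval_C]
    have := (abs_lt.1 (hp x hx)).2
    linarith
  filter_upwards [ht.eventually (gt_mem_nhds hlt), self_mem_nhdsWithin] with z hz hz2
  refine le_trans (harm_mono hab hf (arc_integrable_cont hab (p + C (ε / 3)).continuous.continuousOn)
    ?_ hz2) hz.le
  filter_upwards [hfc, arc_ae_mem a b] with t h1 h2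
  have := (abs_lt.1 (hp t h2)).1
  simp only [eval_add, eval_C]
  linarith

/-! ### Topology of slit domains and a maximum principle -/

lemma slit_segment {E : Set ℝ} {c : ℝ} (hc : c ∉ E) {z : ℂ} (hz : z.im ≠ 0) :
    segment ℝ z (c : ℂ) ⊆ (Complex.ofReal '' E)ᶜ := by
  rintro w ⟨s, t, hs, ht, hst, rfl⟩ ⟨y, hy, h⟩
  have him := congrArg Complex.im h
  simp at him
  rcases him with h0 | h0
  · subst h0
    simp at hst
    subst hst
    simp at h
    exact hc (h ▸ hy)
  · exact hz h0

lemma slit_preconn {E : Set ℝ} (hE : IsCompact E) : IsPreconnected (Complex.ofReal '' E)ᶜ := by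
  obtain ⟨M, hM⟩ := hE.bddAbove
  have hc : (M + 1) ∉ E := fun h => by have := hM h; linarith
  have hseg : ∀ x y : ℂ, IsPreconnected (segment ℝ x y) := fun x y =>
    (convex_segment x y).isPreconnected
  refine isPreconnected_of_forall (((M + 1 : ℝ)) : ℂ) fun z hz => ?_
  by_cases h : z.im = 0
  · have hz' : z = (z.re : ℂ) := Complex.ext rfl (by simpa using h)
    have hzE : z.re ∉ E := fun hh => hz ⟨z.re, hh, hz'.symm⟩
    have him : (z + Complex.I).im ≠ 0 := by simp [h]
    refine ⟨segment ℝ (z + Complex.I) (z.re : ℂ) ∪ segment ℝ (z + Complex.I) ((M + 1 : ℝ) : ℂ),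
      union_subset (slit_segment hzE him) (slit_segment hc him), Or.inr (right_mem_segment _ _ _),
      Or.inl ?_, IsPreconnected.union (z + Complex.I) (left_mem_segment _ _ _)
        (left_mem_segment _ _ _) (hseg _ _) (hseg _ _)⟩
    have h := right_mem_segment ℝ (z + Complex.I) (z.re : ℂ)
    rwa [← hz'] at h ⊢
  · exact ⟨_, slit_segment hc h, right_mem_segment _ _ _, left_mem_segment _ _ _, hseg _ _⟩

lemma slit_neBot (E : Set ℝ) (x : ℝ) : (𝓝[(Complex.ofReal '' E)ᶜ] (x : ℂ)).NeBot := by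
  rw [← mem_closure_iff_nhdsWithin_neBot]
  have h1 : (x : ℂ) ∈ closure {z : ℂ | 0 < z.im} := by
    rw [Complex.closure_setOfPred_lt_im]; simp
  refine closure_mono ?_ h1
  rintro z hz ⟨y, _, rfl⟩
  simp at hz

lemma max_principle {Ω : Set ℂ} (hΩ : IsOpen Ω) (hconn : IsPreconnected Ω) (hK : IsCompact Ωᶜ)
    {F G : ℂ → ℂ} (hF : DifferentiableOn ℂ F Ω) {r : ℝ} (hr : 0 < r)
    (hG : DifferentiableOn ℂ G (Metric.ball 0 r))
    (hGF : ∀ ζ ∈ Metric.ball (0 : ℂ) r, ζ ≠ 0 → G ζ = F ζ⁻¹) {M : ℝ}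
    (hbd : ∀ x ∈ Ωᶜ, ∀ ε > 0, ∀ᶠ z in 𝓝[Ω] x, ‖F z‖ ≤ M + ε)
    {x0 : ℂ} (hx0 : x0 ∈ Ωᶜ) (hne : (𝓝[Ω] x0).NeBot) {z0 : ℂ} (hz0 : z0 ∈ Ω) : ‖F z0‖ ≤ M := by
  by_contra hcon
  push Not at hcon
  set ε := (‖F z0‖ - M) / 2 with hε
  have hε0 : 0 < ε := by rw [hε]; linarith
  obtain ⟨R0, hR0⟩ := hK.isBounded.subset_closedBall (0 : ℂ)
  set R : ℝ := max (max R0 ‖z0‖) (2 / r) + 1 with hR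
  have hRR0 : R0 < R := by
    have := le_max_left R0 ‖z0‖; have := le_max_left (max R0 ‖z0‖) (2 / r); linarith
  have hRz : ‖z0‖ ≤ R := by
    have := le_max_right R0 ‖z0‖; have := le_max_left (max R0 ‖z0‖) (2 / r); linarith
  have hRr : 2 / r < R := by
    have := le_max_right (max R0 ‖z0‖) (2 / r); linarith
  have hRpos : 0 < R := lt_trans (by positivity) hRr
  have hRinv : R⁻¹ < r := by
    rw [inv_lt_comm₀ hRpos hr]
    have : r⁻¹ ≤ 2 / r := by rw [div_eq_mul_inv]; have := inv_pos.2 hr; linarith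
    linarith
  -- the compact set
  set T : Set ℂ := {z | z ∈ Ω ∧ M + 2 * ε ≤ ‖F z‖} ∩ Metric.closedBall 0 R with hT
  have hTclosed : IsClosed T := by
    rw [← isOpen_compl_iff, isOpen_iff_mem_nhds]
    intro z hz
    by_cases h1 : z ∈ Metric.closedBall (0 : ℂ) R
    · by_cases h2 : z ∈ Ω
      · have h3 : ‖F z‖ < M + 2 * ε := by
          by_contra h4
          exact hz ⟨⟨h2, not_lt.1 h4⟩, h1⟩
        have hc : ContinuousAt (fun z => ‖F z‖) z :=
          ((hF.differentiableAt (hΩ.mem_nhds h2)).continuousAt).norm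
        filter_upwards [hc.eventually (gt_mem_nhds h3)] with y hy hy2
        exact absurd hy2.1.2 (not_le.2 hy)
      · have := hbd z h2 ε hε0
        rw [eventually_nhdsWithin_iff] at this
        filter_upwards [this] with y hy hy2
        have := hy hy2.1.1
        have := hy2.1.2
        linarith
    · filter_upwards [Metric.isClosed_closedBall.isOpen_compl.mem_nhds h1] with y hy hy2
      exact hy hy2.2
  have hTcomp : IsCompact T :=
    (isCompact_closedBall (0 : ℂ) R).of_isClosed_subset hTclosed inter_subset_right
  have hz0T : z0 ∈ T := ⟨⟨hz0, by rw [hε]; linarith⟩, by simpa using hRz⟩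
  have hTcont : ContinuousOn (fun z => ‖F z‖) T :=
    (hF.continuousOn.mono fun z hz => hz.1.1).norm
  obtain ⟨z1, hz1, hmax⟩ := hTcomp.exists_isMaxOn ⟨z0, hz0T⟩ hTcont
  have hin : ∀ z ∈ Ω, ‖z‖ ≤ R → ‖F z‖ ≤ ‖F z1‖ := by
    intro z hz hzR
    by_cases h : M + 2 * ε ≤ ‖F z‖
    · exact hmax (show z ∈ T from ⟨⟨hz, h⟩, by simpa using hzR⟩)
    · push Not at h
      exact h.le.trans hz1.1.2
  have hball : Metric.closedBall (0 : ℂ) R⁻¹ ⊆ Metric.ball 0 r :=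
    Metric.closedBall_subset_ball hRinv
  have hout : ∀ z ∈ Ω, R < ‖z‖ → ‖F z‖ ≤ ‖F z1‖ := by
    intro z _ hzR
    have hz0 : z ≠ 0 := by rintro rfl; simp at hzR; linarith
    have hd : DiffContOnCl ℂ G (Metric.ball 0 R⁻¹) := by
      apply DifferentiableOn.diffContOnCl
      rw [closure_ball _ (inv_pos.2 hRpos).ne']
      exact hG.mono hball
    have hzi : z⁻¹ ∈ closure (Metric.ball (0 : ℂ) R⁻¹) := by
      apply subset_closure
      rw [mem_ball_zero_iff, norm_inv]
      exact inv_strictAnti₀ hRpos hzR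
    have := Complex.norm_le_of_forall_mem_frontier_norm_le Metric.isBounded_ball hd
      (C := ‖F z1‖) ?_ hzi
    · rw [hGF z⁻¹ _ (inv_ne_zero hz0), inv_inv] at this
      · exact this
      · apply hball; rw [closure_ball _ (inv_pos.2 hRpos).ne'] at hzi; exact hzi
    · intro ζ hζ
      rw [frontier_ball _ (inv_pos.2 hRpos).ne', mem_sphere_zero_iff_norm] at hζ
      have hζ0 : ζ ≠ 0 := by rintro rfl; rw [norm_zero] at hζ; have := inv_pos.2 hRpos; linarith
      rw [hGF ζ (hball (by rw [mem_closedBall_zero_iff, hζ])) hζ0]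
      have hn : ‖ζ⁻¹‖ = R := by rw [norm_inv, hζ, inv_inv]
      apply hin _ _ hn.le
      by_contra hc
      have := hR0 hc
      rw [mem_closedBall_zero_iff, hn] at this
      linarith
  have hM : IsMaxOn (norm ∘ F) Ω z1 := by
    intro z hz
    rcases le_or_gt ‖z‖ R with h | h
    · exact hin z hz h
    · exact hout z hz h
  have hconst := Complex.norm_eqOn_of_isPreconnected_of_isMaxOn hconn hΩ hF hz1.1.1 hM
  have hev := hbd x0 hx0 ε hε0
  obtain ⟨y, hy1, hy2⟩ := (hev.and self_mem_nhdsWithin).exists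
  have h1 := hconst hy2
  have h2 := hz1.1.2
  simp only [Function.comp, Function.const] at h1
  rw [h1] at hy1
  linarith



/-! ### Sums of harmonic extensions -/

/-- The union of the slits. -/
def slitU {d : ℕ} (A B : Fin d → ℝ) (J : Finset (Fin d)) : Set ℝ := ⋃ j ∈ J, Icc (A j) (B j)

/-- The complement of the slits. -/
def slitD {d : ℕ} (A B : Fin d → ℝ) (J : Finset (Fin d)) : Set ℂ :=
  (Complex.ofReal '' slitU A B J)ᶜ

/-- Sum of harmonic extensions. -/
def US {d : ℕ} (A B : Fin d → ℝ) (J : Finset (Fin d)) (f : Fin d → ℝ → ℝ) (z : ℂ) : ℝ :=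
  ∑ j ∈ J, harmExt (A j) (B j) (f j) z

/-- Exponential of the analytic completion. -/
def FS {d : ℕ} (A B : Fin d → ℝ) (J : Finset (Fin d)) (f : Fin d → ℝ → ℝ) (z : ℂ) : ℂ :=
  Complex.exp (∑ j ∈ J, Th (A j) (B j) (f j) z)

section
variable {d : ℕ} {A B : Fin d → ℝ}

lemma slitU_compact (A B : Fin d → ℝ) (J : Finset (Fin d)) : IsCompact (slitU A B J) :=
  J.isCompact_biUnion fun _ _ => isCompact_Icc

lemma mem_slitD {J : Finset (Fin d)} {z : ℂ} :
    z ∈ slitD A B J ↔ ∀ j ∈ J, z ∉ cutC (A j) (B j) := by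
  unfold slitD slitU cutC
  simp only [mem_compl_iff, mem_image, mem_iUnion]
  constructor
  · rintro h j hj ⟨x, hx, hxz⟩
    exact h ⟨x, ⟨j, hj, hx⟩, hxz⟩
  · rintro h ⟨x, ⟨j, hj, hx⟩, hxz⟩
    exact h j hj ⟨x, hx, hxz⟩

lemma slitD_compl_compact (J : Finset (Fin d)) : IsCompact (slitD A B J)ᶜ := by
  unfold slitD
  rw [compl_compl]
  exact (slitU_compact A B J).image Complex.continuous_ofReal

lemma slitD_open (J : Finset (Fin d)) : IsOpen (slitD A B J) := by
  rw [← compl_compl (slitD A B J)]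
  exact (slitD_compl_compact J).isClosed.isOpen_compl

lemma slitD_preconn (J : Finset (Fin d)) : IsPreconnected (slitD A B J) :=
  slit_preconn (slitU_compact A B J)

lemma mem_slitD_erase (hdisj : ∀ i j, i ≠ j → Disjoint (Set.Icc (A i) (B i)) (Set.Icc (A j) (B j)))
    {k : Fin d} {x : ℝ} (hx : x ∈ Icc (A k) (B k)) :
    (x : ℂ) ∈ slitD A B (Finset.univ.erase k) := by
  rw [mem_slitD]
  intro j hj
  apply ofReal_notMem_cut
  intro h
  exact (Set.disjoint_left.1 (hdisj j k (Finset.ne_of_mem_erase hj))) h hx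

lemma FS_norm (hAB : ∀ i, A i < B i) (J : Finset (Fin d)) (f : Fin d → ℝ → ℝ) {z : ℂ}
    (hz : z ∈ slitD A B J) : ‖FS A B J f z‖ = Real.exp (US A B J f z) := by
  unfold FS US
  rw [Complex.norm_exp, Complex.re_sum]
  congr 1
  apply Finset.sum_congr rfl
  intro j hj
  exact (harm_theta (hAB j) (f j) (mem_slitD.1 hz j hj)).symm

lemma FS_diff (hAB : ∀ i, A i < B i) (J : Finset (Fin d)) {f : Fin d → ℝ → ℝ}
    (hf : ∀ i, Integrable (f i) (arcsineMeasure (A i) (B i))) :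
    DifferentiableOn ℂ (FS A B J f) (slitD A B J) := by
  intro z hz
  apply DifferentiableAt.differentiableWithinAt
  unfold FS
  apply DifferentiableAt.cexp
  apply DifferentiableAt.fun_sum
  intro j hj
  exact Th_diff (hAB j) (hf j) (mem_slitD.1 hz j hj)

lemma US_contAt (hAB : ∀ i, A i < B i) (J : Finset (Fin d)) {f : Fin d → ℝ → ℝ}
    (hf : ∀ i, Integrable (f i) (arcsineMeasure (A i) (B i))) {z : ℂ} (hz : z ∈ slitD A B J) :
    ContinuousAt (US A B J f) z := by
  unfold US
  apply tendsto_finsetSum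
  intro j hj
  exact harm_contAt (hAB j) (hf j) (mem_slitD.1 hz j hj)

lemma US_cont_Icc (hAB : ∀ i, A i < B i)
    (hdisj : ∀ i j, i ≠ j → Disjoint (Set.Icc (A i) (B i)) (Set.Icc (A j) (B j)))
    {f : Fin d → ℝ → ℝ}
    (hf : ∀ i, Integrable (f i) (arcsineMeasure (A i) (B i))) (k : Fin d) :
    ContinuousOn (fun x : ℝ => US A B (Finset.univ.erase k) f (x : ℂ)) (Icc (A k) (B k)) := by
  intro x hx
  apply ContinuousAt.continuousWithinAt
  exact ContinuousAt.comp (f := fun x : ℝ => (x : ℂ)) (US_contAt hAB _ hf (mem_slitD_erase hdisj hx))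
    Complex.continuous_ofReal.continuousAt

lemma US_split (A B : Fin d → ℝ) (f : Fin d → ℝ → ℝ) (k : Fin d) (z : ℂ) :
    US A B Finset.univ f z = harmExt (A k) (B k) (f k) z + US A B (Finset.univ.erase k) f z := by
  unfold US
  exact (Finset.add_sum_erase _ (fun j => harmExt (A j) (B j) (f j) z) (Finset.mem_univ k)).symm

lemma US_nonneg (hAB : ∀ i, A i < B i) (J : Finset (Fin d)) {f : Fin d → ℝ → ℝ}
    (hf : ∀ i, Integrable (f i) (arcsineMeasure (A i) (B i))) (h0 : ∀ i t, 0 ≤ f i t)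
    {z : ℂ} (hz : z ∈ slitD A B J) : 0 ≤ US A B J f z :=
  Finset.sum_nonneg fun j hj => harm_nonneg (hAB j) (hf j) (h0 j) (mem_slitD.1 hz j hj)

lemma lemmaA (hAB : ∀ i, A i < B i)
    (hdisj : ∀ i j, i ≠ j → Disjoint (Set.Icc (A i) (B i)) (Set.Icc (A j) (B j)))
    {f : Fin d → ℝ → ℝ} (hf : ∀ i, Integrable (f i) (arcsineMeasure (A i) (B i))) {M : ℝ}
    (hM : ∀ k, ∀ᵐ t ∂(arcsineMeasure (A k) (B k)),
      f k t ≤ M - US A B (Finset.univ.erase k) f (t : ℂ)) (k0 : Fin d)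
    {z : ℂ} (hz : z ∈ slitD A B Finset.univ) : US A B Finset.univ f z ≤ M := by
  have hgood : ∀ᶠ ζ in 𝓝 (0 : ℂ), ∀ j : Fin d, 0 < (rrI (A j) (B j) ζ).re ∧
      DifferentiableAt ℂ (rrI (A j) (B j)) ζ := by
    rw [eventually_all]
    exact fun j => rrI_good _ _
  obtain ⟨r, hr, hball⟩ := Metric.eventually_nhds_iff_ball.1 hgood
  set G : ℂ → ℂ := fun ζ => Complex.exp (∑ j, Theta (A j) (B j) (f j) (rrI (A j) (B j) ζ)) with hG
  have key := max_principle (slitD_open (A := A) (B := B) Finset.univ) (slitD_preconn _)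
    (slitD_compl_compact _) (FS_diff hAB Finset.univ hf) hr (G := G) (M := Real.exp M) ?_ ?_ ?_
    (x0 := (A k0 : ℂ)) ?_ (slit_neBot _ _) hz
  · rw [FS_norm hAB _ _ hz] at key
    exact Real.exp_le_exp.1 key
  · intro ζ hζ
    apply DifferentiableAt.differentiableWithinAt
    apply DifferentiableAt.cexp
    apply DifferentiableAt.fun_sum
    intro j _
    exact (Theta_differentiableAt (hAB j) (hf j) (hball ζ hζ j).1).comp ζ (hball ζ hζ j).2
  · intro ζ hζ h0
    simp only [hG, FS, Th]
    congr 1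
    apply Finset.sum_congr rfl
    intro j _
    rw [rrI_eq _ _ h0]
  · intro x hx ε hε
    simp only [slitD, compl_compl] at hx
    obtain ⟨x, hx, rfl⟩ := hx
    simp only [slitU, mem_iUnion] at hx
    obtain ⟨k, _, hx⟩ := hx
    obtain ⟨δ, hδ, hδε⟩ : ∃ δ > 0, Real.exp (M + δ) ≤ Real.exp M + ε := by
      have hc : ContinuousAt (fun δ : ℝ => Real.exp (M + δ)) 0 := by fun_prop
      have : ∀ᶠ δ in 𝓝 (0 : ℝ), Real.exp (M + δ) < Real.exp M + ε :=
        hc.eventually (gt_mem_nhds (by simpa using hε))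
      have h2 := (this.filter_mono (nhdsWithin_le_nhds (s := Ioi 0))).and self_mem_nhdsWithin
      obtain ⟨δ, h3, h4⟩ := h2.exists
      exact ⟨δ, h4, h3.le⟩
    have hB := lemmaB (hAB k) (hf k) (c := fun t => M - US A B (Finset.univ.erase k) f (t : ℂ))
      (continuousOn_const.sub (US_cont_Icc hAB hdisj hf k)) (hM k) hx (half_pos hδ)
    have hsub : slitD A B Finset.univ ⊆ (cutC (A k) (B k))ᶜ := fun z hz =>
      mem_slitD.1 hz k (Finset.mem_univ k)
    have hB' := hB.filter_mono (nhdsWithin_mono _ hsub)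
    have hc := (US_contAt hAB _ hf (mem_slitD_erase hdisj hx)).eventually
      (gt_mem_nhds (show US A B (Finset.univ.erase k) f (x : ℂ) <
        US A B (Finset.univ.erase k) f (x : ℂ) + δ / 2 by linarith))
    have hc' := hc.filter_mono (nhdsWithin_le_nhds (s := slitD A B Finset.univ))
    filter_upwards [hB', hc', self_mem_nhdsWithin] with z h1 h2 h3
    rw [FS_norm hAB _ _ h3, US_split A B f k]
    refine le_trans (Real.exp_le_exp.2 ?_) hδε
    linarith
  · intro h
    exact mem_slitD.1 h k0 (Finset.mem_univ _) ⟨A k0, left_mem_Icc.2 (hAB k0).le, rfl⟩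

lemma core_one (hAB : ∀ i, A i < B i)
    (hdisj : ∀ i j, i ≠ j → Disjoint (Set.Icc (A i) (B i)) (Set.Icc (A j) (B j)))
    {f n : Fin d → ℝ → ℝ} (hf : ∀ i, Integrable (f i) (arcsineMeasure (A i) (B i)))
    (hf0 : ∀ i t, 0 ≤ f i t) {M : ℝ}
    (hfn : ∀ k, ∀ᵐ t ∂(arcsineMeasure (A k) (B k)), f k t ≤
      1 / 2 * max (US A B (Finset.univ.erase k) n (t : ℂ) -
        US A B (Finset.univ.erase k) f (t : ℂ)) 0)
    (hP : ∀ k, ∀ x ∈ Icc (A k) (B k), US A B (Finset.univ.erase k) f (x : ℂ) ≤ M)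
    (hN : ∀ k, ∀ x ∈ Icc (A k) (B k), US A B (Finset.univ.erase k) n (x : ℂ) ≤ M)
    (i : Fin d) {x0 : ℝ} (hx0 : x0 ∈ Icc (A i) (B i))
    (hx0M : US A B (Finset.univ.erase i) f (x0 : ℂ) = M) : M = 0 := by
  have hhalf : ∀ k, ∀ᵐ t ∂(arcsineMeasure (A k) (B k)), f k t ≤
      1 / 2 * (M - US A B (Finset.univ.erase k) f (t : ℂ)) := by
    intro k
    filter_upwards [hfn k, arc_ae_mem (A k) (B k)] with t h1 h2
    refine h1.trans ?_
    have h3 := hP k t h2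
    have h4 := hN k t h2
    have : max (US A B (Finset.univ.erase k) n (t : ℂ) - US A B (Finset.univ.erase k) f (t : ℂ)) 0 ≤
      M - US A B (Finset.univ.erase k) f (t : ℂ) := max_le (by linarith) (by linarith)
    linarith
  have hA : ∀ z ∈ slitD A B Finset.univ, US A B Finset.univ f z ≤ M := by
    intro z hz
    refine lemmaA hAB hdisj hf (fun k => ?_) i hz
    filter_upwards [hhalf k, arc_ae_mem (A k) (B k)] with t h1 h2
    have h3 := hP k t h2
    linarith
  have hcutnn : ∀ k, ∀ z ∈ slitD A B Finset.univ, 0 ≤ harmExt (A k) (B k) (f k) z := fun k z hz =>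
    harm_nonneg (hAB k) (hf k) (hf0 k) (mem_slitD.1 hz k (Finset.mem_univ k))
  have hPi : ∀ z ∈ slitD A B (Finset.univ.erase i), US A B (Finset.univ.erase i) f z ≤ M := by
    intro z hz
    by_cases h : z ∈ cutC (A i) (B i)
    · obtain ⟨x, hx, rfl⟩ := h
      exact hP i x hx
    · have hz' : z ∈ slitD A B Finset.univ := by
        rw [mem_slitD] at hz ⊢
        intro j _
        by_cases hj : j = i
        · rw [hj]; exact h
        · exact hz j (Finset.mem_erase.2 ⟨hj, Finset.mem_univ _⟩)
      have h1 := hA z hz'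
      have h2 := hcutnn i z hz'
      rw [US_split A B f i] at h1
      linarith
  have hx0D := mem_slitD_erase hdisj hx0
  have hPconst : ∀ z ∈ slitD A B (Finset.univ.erase i), US A B (Finset.univ.erase i) f z = M := by
    have hmax : IsMaxOn (norm ∘ FS A B (Finset.univ.erase i) f) (slitD A B (Finset.univ.erase i))
        (x0 : ℂ) := by
      intro z hz
      simp only [Function.comp, Set.mem_ofPred_eq]
      rw [FS_norm hAB _ _ hz, FS_norm hAB _ _ hx0D, hx0M]
      exact Real.exp_le_exp.2 (hPi z hz)
    intro z hz
    have := Complex.norm_eqOn_of_isPreconnected_of_isMaxOn (slitD_preconn _) (slitD_open _)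
      (FS_diff hAB _ hf) hx0D hmax hz
    simp only [Function.comp, Function.const] at this
    rw [FS_norm hAB _ _ hz, FS_norm hAB _ _ hx0D, hx0M] at this
    exact Real.exp_injective this
  have hsubE : ∀ k, slitD A B Finset.univ ⊆ slitD A B (Finset.univ.erase k) := by
    intro k z hz
    rw [mem_slitD] at hz ⊢
    exact fun j _ => hz j (Finset.mem_univ _)
  have hall : ∀ z ∈ slitD A B Finset.univ, US A B Finset.univ f z = M := by
    intro z hz
    have h1 := hA z hz
    have h2 := hcutnn i z hz
    have h3 := hPconst z (hsubE i hz)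
    have h4 := US_split A B f i z
    linarith
  have hl : ∀ l, l ≠ i → ∀ x ∈ Icc (A l) (B l), US A B (Finset.univ.erase l) f (x : ℂ) = M := by
    intro l _ x hx
    refine le_antisymm (hP l x hx) ?_
    have hct : Tendsto (US A B (Finset.univ.erase l) f) (𝓝[slitD A B Finset.univ] (x : ℂ))
        (𝓝 (US A B (Finset.univ.erase l) f (x : ℂ))) :=
      (US_contAt hAB _ hf (mem_slitD_erase hdisj hx)).tendsto.mono_left nhdsWithin_le_nhds
    have hne : (𝓝[slitD A B Finset.univ] (x : ℂ)).NeBot := slit_neBot _ _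
    have hle : ∀ ε > 0, M - US A B (Finset.univ.erase l) f (x : ℂ) ≤
        1 / 2 * (M - US A B (Finset.univ.erase l) f (x : ℂ)) + ε := by
      intro ε hε
      have hB := lemmaB (hAB l) (hf l)
        (c := fun t => 1 / 2 * (M - US A B (Finset.univ.erase l) f (t : ℂ)))
        (continuousOn_const.mul (continuousOn_const.sub (US_cont_Icc hAB hdisj hf l))) (hhalf l)
        hx hε
      have hsub : slitD A B Finset.univ ⊆ (cutC (A l) (B l))ᶜ := fun z hz =>
        mem_slitD.1 hz l (Finset.mem_univ l)
      refine le_of_tendsto (hct.const_sub M) ?_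
      filter_upwards [hB.filter_mono (nhdsWithin_mono _ hsub), self_mem_nhdsWithin] with z h1 h2
      have h3 := hall z h2
      rw [US_split A B f l] at h3
      linarith
    have := le_of_forall_pos_le_add hle
    linarith
  rw [← hx0M]
  unfold US
  apply Finset.sum_eq_zero
  intro l hl'
  have hne := Finset.ne_of_mem_erase hl'
  have hz := mem_slitD.1 hx0D l hl'
  rw [← harm_const (hAB l) 0 hz]
  apply harm_congr
  filter_upwards [hhalf l, arc_ae_mem (A l) (B l)] with t h1 h2
  rw [hl l hne t h2] at h1
  have := hf0 l t
  linarith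

lemma core (hAB : ∀ i, A i < B i)
    (hdisj : ∀ i j, i ≠ j → Disjoint (Set.Icc (A i) (B i)) (Set.Icc (A j) (B j)))
    {u θ : Fin d → ℝ → ℝ} (hu : ∀ i, Integrable (u i) (arcsineMeasure (A i) (B i)))
    (h0 : ∀ i t, 0 ≤ θ i t) (h1 : ∀ i t, θ i t ≤ 1)
    (heq : ∀ i, ∀ᵐ t ∂(arcsineMeasure (A i) (B i)),
      u i t = -(1 / 2) * (θ i t * US A B (Finset.univ.erase i) u (t : ℂ))) :
    ∀ i, ∀ᵐ t ∂(arcsineMeasure (A i) (B i)), u i t = 0 := by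
  set f : Fin d → ℝ → ℝ := fun i t => max (u i t) 0 with hfdef
  set n : Fin d → ℝ → ℝ := fun i t => max (-u i t) 0 with hndef
  have hf : ∀ i, Integrable (f i) (arcsineMeasure (A i) (B i)) := fun i => (hu i).pos_part
  have hn : ∀ i, Integrable (n i) (arcsineMeasure (A i) (B i)) := fun i => (hu i).neg_part
  have hf0 : ∀ i t, 0 ≤ f i t := fun i t => le_max_right _ _
  have hn0 : ∀ i t, 0 ≤ n i t := fun i t => le_max_right _ _
  have hun : ∀ i, u i = fun t => f i t - n i t := by
    intro i; funext t
    simp only [hfdef, hndef]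
    rcases le_total (u i t) 0 with h | h
    · rw [max_eq_right h, max_eq_left (by linarith)]; ring
    · rw [max_eq_left h, max_eq_right (by linarith)]; ring
  have hUS : ∀ i, ∀ x ∈ Icc (A i) (B i), US A B (Finset.univ.erase i) u (x : ℂ) =
      US A B (Finset.univ.erase i) f (x : ℂ) - US A B (Finset.univ.erase i) n (x : ℂ) := by
    intro i x hx
    unfold US
    rw [← Finset.sum_sub_distrib]
    apply Finset.sum_congr rfl
    intro j hj
    rw [← harm_sub (hAB j) (hf j) (hn j) (mem_slitD.1 (mem_slitD_erase hdisj hx) j hj), ← hun j]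
  have hfle : ∀ k, ∀ᵐ t ∂(arcsineMeasure (A k) (B k)), f k t ≤
      1 / 2 * max (US A B (Finset.univ.erase k) n (t : ℂ) -
        US A B (Finset.univ.erase k) f (t : ℂ)) 0 := by
    intro k
    filter_upwards [heq k, arc_ae_mem (A k) (B k)] with t e1 e2
    rw [hUS k t e2] at e1
    simp only [hfdef]
    refine max_le ?_ (by positivity)
    rw [e1]
    have a1 := h0 k t
    have a2 := h1 k t
    have a3 := le_max_left (US A B (Finset.univ.erase k) n (t : ℂ) -
        US A B (Finset.univ.erase k) f (t : ℂ)) 0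
    have a4 := le_max_right (US A B (Finset.univ.erase k) n (t : ℂ) -
        US A B (Finset.univ.erase k) f (t : ℂ)) 0
    have a5 := mul_le_mul_of_nonneg_left a3 a1
    have a6 := mul_le_mul_of_nonneg_right a2 a4
    simp only [hfdef] at a5 a6 ⊢
    linarith
  have hnle : ∀ k, ∀ᵐ t ∂(arcsineMeasure (A k) (B k)), n k t ≤
      1 / 2 * max (US A B (Finset.univ.erase k) f (t : ℂ) -
        US A B (Finset.univ.erase k) n (t : ℂ)) 0 := by
    intro k
    filter_upwards [heq k, arc_ae_mem (A k) (B k)] with t e1 e2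
    rw [hUS k t e2] at e1
    simp only [hndef]
    refine max_le ?_ (by positivity)
    rw [e1]
    have a1 := h0 k t
    have a2 := h1 k t
    have a3 := le_max_left (US A B (Finset.univ.erase k) f (t : ℂ) -
        US A B (Finset.univ.erase k) n (t : ℂ)) 0
    have a4 := le_max_right (US A B (Finset.univ.erase k) f (t : ℂ) -
        US A B (Finset.univ.erase k) n (t : ℂ)) 0
    have a5 := mul_le_mul_of_nonneg_left a3 a1
    have a6 := mul_le_mul_of_nonneg_right a2 a4
    simp only [hndef] at a5 a6 ⊢
    linarith
  intro i0
  have hQc : ∀ k, ContinuousOn (fun x : ℝ => max (US A B (Finset.univ.erase k) f (x : ℂ))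
      (US A B (Finset.univ.erase k) n (x : ℂ))) (Icc (A k) (B k)) := fun k =>
    (US_cont_Icc hAB hdisj hf k).sup (US_cont_Icc hAB hdisj hn k)
  have hQm : ∀ k, ∃ x ∈ Icc (A k) (B k), IsMaxOn (fun x : ℝ =>
      max (US A B (Finset.univ.erase k) f (x : ℂ)) (US A B (Finset.univ.erase k) n (x : ℂ)))
      (Icc (A k) (B k)) x := fun k =>
    isCompact_Icc.exists_isMaxOn (nonempty_Icc.2 (hAB k).le) (hQc k)
  choose y hy hymax using hQm
  obtain ⟨i, _, hi⟩ := Finset.exists_max_image Finset.univ (fun k =>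
    max (US A B (Finset.univ.erase k) f (y k : ℂ)) (US A B (Finset.univ.erase k) n (y k : ℂ)))
    ⟨i0, Finset.mem_univ _⟩
  set M := max (US A B (Finset.univ.erase i) f (y i : ℂ)) (US A B (Finset.univ.erase i) n (y i : ℂ))
    with hM
  have hle : ∀ k, ∀ x ∈ Icc (A k) (B k), max (US A B (Finset.univ.erase k) f (x : ℂ))
      (US A B (Finset.univ.erase k) n (x : ℂ)) ≤ M := fun k x hx =>
    le_trans (hymax k hx) (hi k (Finset.mem_univ _))
  have hP : ∀ k, ∀ x ∈ Icc (A k) (B k), US A B (Finset.univ.erase k) f (x : ℂ) ≤ M := fun k x hx =>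
    (le_max_left _ _).trans (hle k x hx)
  have hN : ∀ k, ∀ x ∈ Icc (A k) (B k), US A B (Finset.univ.erase k) n (x : ℂ) ≤ M := fun k x hx =>
    (le_max_right _ _).trans (hle k x hx)
  have hM0 : M = 0 := by
    rcases max_choice (US A B (Finset.univ.erase i) f (y i : ℂ))
      (US A B (Finset.univ.erase i) n (y i : ℂ)) with h | h
    · exact core_one hAB hdisj hf hf0 hfle hP hN i (hy i) (hM.trans h).symm
    · exact core_one hAB hdisj hn hn0 hnle hN hP i (hy i) (hM.trans h).symm
  filter_upwards [heq i0, arc_ae_mem (A i0) (B i0)] with t e1 e2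
  have hz := mem_slitD_erase hdisj e2
  have p1 := hP i0 t e2
  have p2 := hN i0 t e2
  have p3 := US_nonneg hAB _ hf hf0 hz
  have p4 := US_nonneg hAB _ hn hn0 hz
  have p5 := hUS i0 t e2
  have : US A B (Finset.univ.erase i0) u (t : ℂ) = 0 := by
    simp only [hfdef, hndef] at p1 p2 p3 p4 p5
    rw [p5]
    linarith
  rw [e1, this]; ring

end



/-! ### Equicontinuity and the compact operator -/

lemma kden_diff_le {a b : ℝ} (hab : a < b) (ρ σ : ℂ) {t : ℝ} (ht : t ∈ Icc a b) :
    ‖kden a b σ t - kden a b ρ t‖ ≤ ‖σ⁻¹ - ρ⁻¹‖ + ‖σ - ρ‖ := by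
  have h3 : 0 < b - a := by linarith
  have h4 : 0 ≤ (b - t) / (b - a) := div_nonneg (by linarith [ht.2]) h3.le
  have h5 : 0 ≤ (t - a) / (b - a) := div_nonneg (by linarith [ht.1]) h3.le
  have h4' : (b - t) / (b - a) ≤ 1 := by rw [div_le_one h3]; linarith [ht.1]
  have h5' : (t - a) / (b - a) ≤ 1 := by rw [div_le_one h3]; linarith [ht.2]
  have e : kden a b σ t - kden a b ρ t = (((b - t) / (b - a) : ℝ) : ℂ) * (σ⁻¹ - ρ⁻¹) +
      (((t - a) / (b - a) : ℝ) : ℂ) * (σ - ρ) := by unfold kden; ring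
  rw [e]
  refine (norm_add_le _ _).trans ?_
  rw [norm_mul, norm_mul, Complex.norm_real, Complex.norm_real, Real.norm_of_nonneg h4,
    Real.norm_of_nonneg h5]
  have := mul_le_mul_of_nonneg_right h4' (norm_nonneg (σ⁻¹ - ρ⁻¹))
  have := mul_le_mul_of_nonneg_right h5' (norm_nonneg (σ - ρ))
  linarith

lemma harm_abs_le {a b : ℝ} (hab : a < b) {h : ℝ → ℝ} (hh : Integrable h (arcsineMeasure a b))
    {C : ℝ} (hC : ∀ᵐ t ∂(arcsineMeasure a b), |h t| ≤ C) {z : ℂ} (hz : z ∉ cutC a b) :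
    |harmExt a b h z| ≤ C := by
  have := arc_isProb hab
  rw [abs_le]
  constructor
  · rw [← harm_const hab (-C) hz]
    refine harm_mono hab (integrable_const _) hh ?_ hz
    filter_upwards [hC] with t ht using (abs_le.1 ht).1
  · rw [← harm_const hab C hz]
    refine harm_mono hab hh (integrable_const _) ?_ hz
    filter_upwards [hC] with t ht using (abs_le.1 ht).2

lemma harm_equi {a b : ℝ} (hab : a < b) {z0 : ℂ} (hz0 : z0 ∉ cutC a b) {ε : ℝ} (hε : 0 < ε) :
    ∀ᶠ z in 𝓝 z0, ∀ h : ℝ → ℝ, Integrable h (arcsineMeasure a b) → ∀ C : ℝ, 0 ≤ C →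
      (∀ᵐ t ∂(arcsineMeasure a b), |h t| ≤ C) → |harmExt a b h z - harmExt a b h z0| ≤ C * ε := by
  have hprob := arc_isProb hab
  set ρ := rr a b z0 with hρdef
  have hρ : 0 < ρ.re := rr_re_pos hab hz0
  have hρ0 : ρ ≠ 0 := by intro h; rw [h] at hρ; simp at hρ
  have hpos : 0 < min ρ.re (ρ⁻¹).re := lt_min hρ (re_inv_pos hρ)
  set δ := min ρ.re (ρ⁻¹).re / 2 with hδ
  have hδ0 : 0 < δ := by positivity
  have d1 : δ < ρ.re := by have := min_le_left ρ.re (ρ⁻¹).re; rw [hδ]; linarith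
  have d2 : δ < (ρ⁻¹).re := by have := min_le_right ρ.re (ρ⁻¹).re; rw [hδ]; linarith
  have c0 : ContinuousAt (rr a b) z0 := (rr_diff hab hz0).continuousAt
  have c0i : ContinuousAt (fun z => (rr a b z)⁻¹) z0 := c0.inv₀ hρ0
  have c1 : ContinuousAt (fun z => (rr a b z).re) z0 := Complex.continuous_re.continuousAt.comp c0
  have c2 : ContinuousAt (fun z => ((rr a b z)⁻¹).re) z0 :=
    Complex.continuous_re.continuousAt.comp c0i
  have c3 : ContinuousAt (fun z => δ⁻¹ * δ⁻¹ * (‖(rr a b z)⁻¹ - ρ⁻¹‖ + ‖rr a b z - ρ‖)) z0 :=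
    continuousAt_const.mul ((c0i.sub continuousAt_const).norm.add (c0.sub continuousAt_const).norm)
  have c3' : ∀ᶠ z in 𝓝 z0, δ⁻¹ * δ⁻¹ * (‖(rr a b z)⁻¹ - ρ⁻¹‖ + ‖rr a b z - ρ‖) < ε := by
    apply c3.eventually (gt_mem_nhds _)
    simpa [← hρdef] using hε
  filter_upwards [c1.eventually (lt_mem_nhds d1), c2.eventually (lt_mem_nhds d2), c3',
    (cutC_closed a b).isOpen_compl.mem_nhds hz0] with z g1 g2 g3 g4 h hh C hC0 hC
  have gpos : 0 < (rr a b z).re := hδ0.trans g1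
  rw [harm_theta hab h g4, harm_theta hab h hz0, ← hρdef, Theta_re hab hh gpos, Theta_re hab hh hρ,
    ← integral_sub (re_integrable hab hh gpos) (re_integrable hab hh hρ), ← Real.norm_eq_abs]
  have hb : ∀ᵐ t ∂(arcsineMeasure a b),
      ‖h t * (kk a b (rr a b z) t).re - h t * (kk a b ρ t).re‖ ≤ C * ε := by
    filter_upwards [hC, arc_ae_mem a b] with t ht1 ht2
    rw [← mul_sub, norm_mul, Real.norm_eq_abs, ← Complex.sub_re]
    have n1 := kden_ne hab gpos ht2
    have n2 := kden_ne hab hρ ht2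
    have e : kk a b (rr a b z) t - kk a b ρ t =
        kk a b (rr a b z) t * kk a b ρ t * -(kden a b (rr a b z) t - kden a b ρ t) := by
      unfold kk; field_simp; ring
    have k1 := kk_norm_le hab hδ0 g1.le g2.le ht2
    have k2 := kk_norm_le hab hδ0 d1.le d2.le ht2
    have k3 := kden_diff_le hab ρ (rr a b z) ht2
    have : ‖(kk a b (rr a b z) t - kk a b ρ t).re‖ ≤ ε := by
      refine (Complex.abs_re_le_norm _).trans ?_
      rw [e, norm_mul, norm_mul, norm_neg]
      refine le_trans ?_ g3.le
      gcongr
    gcongr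
  have := norm_integral_le_of_norm_le_const hb
  simpa using this

section
variable {d : ℕ} {A B : Fin d → ℝ}

/-- Disjoint union of the intervals. -/
abbrev YY {d : ℕ} (A B : Fin d → ℝ) : Type := Σ i : Fin d, Icc (A i) (B i)

/-- Components of a function on the disjoint union, extended to the real line. -/
def comps (hAB : ∀ i, A i < B i) (X : YY A B → ℝ) (j : Fin d) (t : ℝ) : ℝ :=
  X ⟨j, projIcc (A j) (B j) (hAB j).le t⟩

lemma comps_cont (hAB : ∀ i, A i < B i) {X : YY A B → ℝ} (hX : Continuous X) (j : Fin d) :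
    Continuous (comps hAB X j) :=
  hX.comp (continuous_sigmaMk.comp continuous_projIcc)

lemma comps_int (hAB : ∀ i, A i < B i) {θ : Fin d → ℝ → ℝ} (hθ : ∀ i, Measurable (θ i))
    (h0 : ∀ i t, 0 ≤ θ i t) (h1 : ∀ i t, θ i t ≤ 1) {X : YY A B → ℝ} (hX : Continuous X)
    (j : Fin d) :
    Integrable (fun t => -(1 / 2) * (θ j t * comps hAB X j t)) (arcsineMeasure (A j) (B j)) := by
  apply Integrable.const_mul
  refine Integrable.bdd_mul (c := 1) (arc_integrable_cont (hAB j) (comps_cont hAB hX j).continuousOn)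
    (hθ j).aestronglyMeasurable (ae_of_all _ fun t => ?_)
  rw [Real.norm_of_nonneg (h0 j t)]
  exact h1 j t

/-- The operator of the fixed point equation. -/
def opFun (hAB : ∀ i, A i < B i) (θ : Fin d → ℝ → ℝ) (X : YY A B → ℝ) (y : YY A B) : ℝ :=
  US A B (Finset.univ.erase y.1) (fun j t => -(1 / 2) * (θ j t * comps hAB X j t)) ((y.2 : ℝ) : ℂ)

lemma US_cont_YY (hAB : ∀ i, A i < B i)
    (hdisj : ∀ i j, i ≠ j → Disjoint (Set.Icc (A i) (B i)) (Set.Icc (A j) (B j)))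
    {f : Fin d → ℝ → ℝ}
    (hf : ∀ i, Integrable (f i) (arcsineMeasure (A i) (B i))) :
    Continuous (fun y : YY A B => US A B (Finset.univ.erase y.1) f ((y.2 : ℝ) : ℂ)) := by
  rw [continuous_sigma_iff]
  intro i
  exact continuousOn_iff_continuous_domRestrict.1 (US_cont_Icc hAB hdisj hf i)

lemma exists_fixed (hAB : ∀ i, A i < B i)
    (hdisj : ∀ i j, i ≠ j → Disjoint (Set.Icc (A i) (B i)) (Set.Icc (A j) (B j)))
    {θ : Fin d → ℝ → ℝ} (hθ : ∀ i, Measurable (θ i))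
    (h0 : ∀ i t, 0 ≤ θ i t) (h1 : ∀ i t, θ i t ≤ 1) {w : Fin d → ℝ → ℝ}
    (hw : ∀ i, Integrable (w i) (arcsineMeasure (A i) (B i))) :
    ∃ x : Fin d → ℝ → ℝ,
      (∀ i, Integrable (fun t => w i t + -(1 / 2) * (θ i t * x i t)) (arcsineMeasure (A i) (B i))) ∧
      ∀ i, ∀ t ∈ Icc (A i) (B i), x i t = US A B (Finset.univ.erase i)
        (fun j s => w j s + -(1 / 2) * (θ j s * x j s)) (t : ℂ) := by
  have hcI : ∀ {X : YY A B → ℝ} (_ : Continuous X) (j : Fin d),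
    Integrable (fun t => -(1 / 2) * (θ j t * comps hAB X j t)) (arcsineMeasure (A j) (B j)) :=
    fun hX j => comps_int hAB hθ h0 h1 hX j
  have hnot : ∀ (y : YY A B), ∀ j ∈ Finset.univ.erase y.1, ((y.2 : ℝ) : ℂ) ∉ cutC (A j) (B j) :=
    fun y => mem_slitD.1 (mem_slitD_erase hdisj y.2.2)
  -- the operator
  let K : BoundedContinuousFunction (YY A B) ℝ →ₗ[ℝ] BoundedContinuousFunction (YY A B) ℝ :=
    { toFun := fun X => BoundedContinuousFunction.mkOfCompact
        ⟨opFun hAB θ X, US_cont_YY hAB hdisj (hcI X.continuous)⟩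
      map_add' := by
        intro X Z
        ext y
        change opFun hAB θ (X + Z : BoundedContinuousFunction (YY A B) ℝ) y =
          opFun hAB θ X y + opFun hAB θ Z y
        unfold opFun US
        rw [← Finset.sum_add_distrib]
        apply Finset.sum_congr rfl
        intro j hj
        rw [← harm_add (hAB j) (hcI X.continuous j) (hcI Z.continuous j) (hnot y j hj)]
        congr 1; funext t
        simp only [comps, BoundedContinuousFunction.coe_add, Pi.add_apply]
        ring
      map_smul' := by
        intro c X
        ext y
        change opFun hAB θ (c • X : BoundedContinuousFunction (YY A B) ℝ) y = c * opFun hAB θ X y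
        unfold opFun US
        rw [Finset.mul_sum]
        apply Finset.sum_congr rfl
        intro j hj
        rw [← harm_smul (hAB j) c _ (hnot y j hj)]
        congr 1; funext t
        simp only [comps, BoundedContinuousFunction.coe_smul, smul_eq_mul]
        ring }
  have hK : ∀ X y, K X y = opFun hAB θ X y := fun X y => rfl
  -- bounds
  have hbd : ∀ (X : BoundedContinuousFunction (YY A B) ℝ), ‖X‖ ≤ 1 → ∀ j t,
      |-(1 / 2) * (θ j t * comps hAB X j t)| ≤ 1 := by
    intro X hX j t
    have e1 : |comps hAB X j t| ≤ 1 := (X.norm_coe_le_norm _).trans hX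
    rw [abs_mul, abs_mul, abs_of_nonneg (h0 j t)]
    have e2 := h1 j t
    have e3 := h0 j t
    have e4 := abs_nonneg (comps hAB X j t)
    have e5 : |-(1 / 2 : ℝ)| = 1 / 2 := by rw [abs_neg, abs_of_pos]; norm_num
    rw [e5]
    nlinarith
  have hKc : IsCompactOperator K := by
    rw [isCompactOperator_iff_exists_mem_nhds_isCompact_closure_image]
    refine ⟨Metric.closedBall 0 1, Metric.closedBall_mem_nhds _ one_pos, ?_⟩
    refine BoundedContinuousFunction.arzela_ascoli (Metric.closedBall (0 : ℝ) d)
      (isCompact_closedBall _ _) _ ?_ ?_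
    · rintro _ y ⟨X, hX, rfl⟩
      rw [mem_closedBall_zero_iff] at hX ⊢
      rw [hK]
      unfold opFun US
      refine (norm_sum_le _ _).trans ?_
      have : ∀ j ∈ Finset.univ.erase y.1, ‖harmExt (A j) (B j)
          ((fun j t => -(1 / 2) * (θ j t * comps hAB X j t)) j) ((y.2 : ℝ) : ℂ)‖ ≤ 1 := fun j hj =>
        harm_abs_le (hAB j) (hcI X.continuous j) (ae_of_all _ (hbd X hX j)) (hnot y j hj)
      refine (Finset.sum_le_card_nsmul _ _ 1 this).trans ?_
      simp only [nsmul_eq_mul, mul_one]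
      have := Finset.card_erase_le (s := (Finset.univ : Finset (Fin d))) (a := y.1)
      rw [Finset.card_univ, Fintype.card_fin] at this
      exact_mod_cast this
    · intro y0
      rw [Metric.equicontinuousAt_iff_right]
      intro ε hε
      obtain ⟨i, x⟩ := y0
      rw [Sigma.nhds_mk, eventually_map]
      have hη : 0 < ε / (d + 1) := by positivity
      have hev : ∀ᶠ z in 𝓝 (((x : ℝ) : ℂ)), ∀ j ∈ Finset.univ.erase i, ∀ h : ℝ → ℝ,
          Integrable h (arcsineMeasure (A j) (B j)) → ∀ C : ℝ, 0 ≤ C →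
          (∀ᵐ t ∂(arcsineMeasure (A j) (B j)), |h t| ≤ C) →
          |harmExt (A j) (B j) h z - harmExt (A j) (B j) h ((x : ℝ) : ℂ)| ≤ C * (ε / (d + 1)) := by
        rw [Filter.eventually_all_finset]
        intro j hj
        exact harm_equi (hAB j) (hnot ⟨i, x⟩ j hj) hη
      have hcx : Continuous (fun y : Icc (A i) (B i) => ((y : ℝ) : ℂ)) := by fun_prop
      filter_upwards [(hcx.tendsto x).eventually hev] with y hy
      rintro ⟨_, X, hX, rfl⟩
      rw [mem_closedBall_zero_iff] at hX
      simp only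
      rw [dist_comm, Real.dist_eq, hK, hK]
      unfold opFun US
      rw [← Finset.sum_sub_distrib]
      refine (Finset.abs_sum_le_sum_abs _ _).trans_lt ?_
      have h2 : ∀ j ∈ Finset.univ.erase i, |harmExt (A j) (B j)
          ((fun j t => -(1 / 2) * (θ j t * comps hAB X j t)) j) ((y : ℝ) : ℂ) -
          harmExt (A j) (B j) ((fun j t => -(1 / 2) * (θ j t * comps hAB X j t)) j) ((x : ℝ) : ℂ)|
          ≤ ε / (d + 1) := by
        intro j hj
        have := hy j hj _ (hcI X.continuous j) 1 zero_le_one (ae_of_all _ (hbd X hX j))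
        rwa [one_mul] at this
      refine (Finset.sum_le_card_nsmul _ _ _ h2).trans_lt ?_
      rw [nsmul_eq_mul]
      have h3 : ((Finset.univ.erase i).card : ℝ) ≤ d := by
        have := Finset.card_erase_le (s := (Finset.univ : Finset (Fin d))) (a := i)
        rw [Finset.card_univ, Fintype.card_fin] at this
        exact_mod_cast this
      calc ((Finset.univ.erase i).card : ℝ) * (ε / (d + 1)) ≤ d * (ε / (d + 1)) := by gcongr
        _ < (d + 1) * (ε / (d + 1)) := by
            apply mul_lt_mul_of_pos_right _ hη; linarith
        _ = ε := by field_simp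
  let T := ContinuousLinearMap.mkOfIsCompactOperator hKc
  have hT : ∀ X, T X = K X := fun X => rfl
  have hTc : IsCompactOperator T := hKc
  have hcompsIcc : ∀ (X : YY A B → ℝ) i t (ht : t ∈ Icc (A i) (B i)),
      comps hAB X i t = X ⟨i, ⟨t, ht⟩⟩ := by
    intro X i t ht
    unfold comps
    rw [projIcc_of_mem _ ht]
  rcases hTc.hasEigenvalue_or_mem_resolventSet (μ := (1 : ℝ)) one_ne_zero with hE | hR
  · exfalso
    obtain ⟨X, hX⟩ := hE.exists_hasEigenvector
    have hX1 : K X = X := by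
      have := hX.apply_eq_smul
      rw [one_smul] at this
      exact this
    apply hX.2
    have hfix : ∀ y, X y = opFun hAB θ X y := fun y => by
      rw [← hK, hX1]
    have hz := core hAB hdisj (u := fun j t => -(1 / 2) * (θ j t * comps hAB X j t)) (θ := θ)
      (hcI X.continuous) h0 h1 (fun i => by
        filter_upwards [arc_ae_mem (A i) (B i)] with t ht
        have e : US A B (Finset.univ.erase i) (fun j t => -(1 / 2) * (θ j t * comps hAB X j t)) (t : ℂ)
          = comps hAB X i t := by
          rw [hcompsIcc X i t ht, hfix]; rfl
        rw [e])
    ext y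
    rw [hfix]
    unfold opFun US
    apply Finset.sum_eq_zero
    intro j hj
    rw [← harm_const (hAB j) 0 (hnot y j hj)]
    exact harm_congr (hz j) _
  · rw [spectrum.mem_resolventSet_iff, map_one] at hR
    let bb : BoundedContinuousFunction (YY A B) ℝ := BoundedContinuousFunction.mkOfCompact
      ⟨_, US_cont_YY hAB hdisj hw⟩
    obtain ⟨V, hV⟩ := hR
    let X : BoundedContinuousFunction (YY A B) ℝ := (↑(V⁻¹) : _ →L[ℝ] _) bb
    have hX : X - K X = bb := by
      have : ((V : BoundedContinuousFunction (YY A B) ℝ →L[ℝ] BoundedContinuousFunction (YY A B) ℝ) *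
        (↑(V⁻¹))) bb = bb := by
        rw [Units.mul_inv]; rfl
      rw [hV] at this
      exact this
    refine ⟨comps hAB X, fun i => (hw i).add (hcI X.continuous i), fun i t ht => ?_⟩
    rw [hcompsIcc X i t ht]
    have h3 := congrArg (fun Z => Z (⟨i, ⟨t, ht⟩⟩ : YY A B)) hX
    have h4 : X ⟨i, ⟨t, ht⟩⟩ = US A B (Finset.univ.erase i) w (t : ℂ) +
        US A B (Finset.univ.erase i) (fun j t => -(1 / 2) * (θ j t * comps hAB X j t)) (t : ℂ) := by
      simp only [BoundedContinuousFunction.sub_apply] at h3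
      rw [sub_eq_iff_eq_add] at h3
      exact h3
    rw [h4]
    unfold US
    rw [← Finset.sum_add_distrib]
    apply Finset.sum_congr rfl
    intro j hj
    rw [harm_add (hAB j) (hw j) (hcI X.continuous j) (hnot ⟨i, ⟨t, ht⟩⟩ j hj)]

end



/-! ### Final assembly -/

lemma log_quad_int {a b : ℝ} (hab : a < b) :
    Integrable (fun t => Real.log ((t - a) * (b - t))) (arcsineMeasure a b) := by
  rw [arc_integrable_iff hab]
  have hp : (0 : ℝ) ≤ Real.pi / 2 := by positivity
  have hs : IntegrableOn (fun φ => Real.log (Real.sin φ)) (Ioo 0 (Real.pi / 2)) := by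
    have := (intervalIntegrable_log_sin (a := 0) (b := Real.pi / 2)).1
    exact this.mono_set Ioo_subset_Ioc_self
  have hc : IntegrableOn (fun φ => Real.log (Real.cos φ)) (Ioo 0 (Real.pi / 2)) := by
    have := (intervalIntegrable_log_cos (a := 0) (b := Real.pi / 2)).1
    exact this.mono_set Ioo_subset_Ioc_self
  have hk : IntegrableOn (fun _ : ℝ => 2 * Real.log (b - a)) (Ioo 0 (Real.pi / 2)) :=
    integrableOn_const (by simp)
  have h := (hk.add (hs.const_mul 2)).add (hc.const_mul 2)
  refine (integrableOn_congr_fun ?_ measurableSet_Ioo).1 h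
  intro φ hφ
  have h1 : 0 < Real.sin φ := Real.sin_pos_of_pos_of_lt_pi hφ.1 (by linarith [hφ.2, Real.pi_pos])
  have h2 : 0 < Real.cos φ := Real.cos_pos_of_mem_Ioo ⟨by linarith [hφ.1, Real.pi_pos], hφ.2⟩
  have e : (a * Real.cos φ ^ 2 + b * Real.sin φ ^ 2 - a) *
      (b - (a * Real.cos φ ^ 2 + b * Real.sin φ ^ 2)) =
      (b - a) ^ 2 * Real.sin φ ^ 2 * Real.cos φ ^ 2 := by
    have e1 := Real.sin_sq_add_cos_sq φ
    have e2 : Real.cos φ ^ 2 = 1 - Real.sin φ ^ 2 := by linarith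
    rw [e2]; ring
  have h3 : 0 < b - a := by linarith
  simp only [Pi.add_apply]
  rw [e, Real.log_mul (by positivity) (by positivity), Real.log_mul (by positivity) (by positivity),
    Real.log_pow, Real.log_pow, Real.log_pow]
  norm_num

lemma vDens_meas (μ : Measure ℝ) (a b : ℝ) : Measurable (vDens μ a b) := by
  unfold vDens lebDeriv
  have := (Measure.measurable_rnDeriv μ volume).ennreal_toReal
  fun_prop

lemma vDens_nonneg (μ : Measure ℝ) (a b x : ℝ) : 0 ≤ vDens μ a b x := by
  unfold vDens lebDeriv
  positivity

lemma log_v_int {μ : Measure ℝ} {a b : ℝ} (hab : a < b) (hS : SzCond μ a b) :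
    Integrable (fun t => Real.log (vDens μ a b t)) (arcsineMeasure a b) := by
  haveI := arc_isProb hab
  have hb : Integrable (fun t => |Real.log Real.pi| + |Real.log (lebDeriv μ t)| +
      (1 / 2) * |Real.log ((t - a) * (b - t))|) (arcsineMeasure a b) :=
    ((integrable_const _).add hS.abs).add ((log_quad_int hab).abs.const_mul _)
  refine hb.mono' (Real.measurable_log.comp (vDens_meas μ a b)).aestronglyMeasurable
    (ae_of_all _ fun t => ?_)
  rw [Real.norm_eq_abs]
  by_cases hv : vDens μ a b t = 0
  · rw [hv, Real.log_zero, abs_zero]; positivity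
  · unfold vDens at hv ⊢
    have h1 : lebDeriv μ t ≠ 0 := by rintro h; simp [h] at hv
    have h2 : Real.sqrt ((t - a) * (b - t)) ≠ 0 := by rintro h; simp [h] at hv
    have h3 : 0 ≤ (t - a) * (b - t) := by
      by_contra h
      exact h2 (Real.sqrt_eq_zero_of_nonpos (not_le.1 h).le)
    rw [Real.log_mul (mul_ne_zero Real.pi_ne_zero h1) h2, Real.log_mul Real.pi_ne_zero h1,
      Real.log_sqrt h3]
    refine (abs_add_le _ _).trans ?_
    have := abs_add_le (Real.log Real.pi) (Real.log (lebDeriv μ t))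
    rw [abs_div, abs_two]
    linarith

section
variable {d : ℕ} {A B : Fin d → ℝ}

lemma prod_Omega (hAB : ∀ i, A i < B i)
    (hdisj : ∀ i j, i ≠ j → Disjoint (Set.Icc (A i) (B i)) (Set.Icc (A j) (B j)))
    (g : Fin d → ℝ → ℝ) {i : Fin d} {x : ℝ} (hx : x ∈ Icc (A i) (B i)) :
    ∏ j ∈ Finset.univ.erase i, (OmegaFun (A j) (B j) (g j) (x : ℂ)).re =
      Real.exp (US A B (Finset.univ.erase i) (fun j t => Real.log (g j t)) (x : ℂ)) := by
  unfold US
  rw [Real.exp_sum]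
  refine Finset.prod_congr rfl fun j hj => ?_
  refine Omega_real (hAB j) (g j) fun h => ?_
  exact (Set.disjoint_left.1 (hdisj j i (Finset.ne_of_mem_erase hj))) h hx

lemma sol_log (hAB : ∀ i, A i < B i)
    (hdisj : ∀ i j, i ≠ j → Disjoint (Set.Icc (A i) (B i)) (Set.Icc (A j) (B j)))
    {v : Fin d → ℝ → ℝ} {g : Fin d → ℝ → ℝ} {S : Fin d → ℂ → ℂ}
    (h : IsSzegoVector d A B v g S) (i : Fin d) :
    ∀ᵐ t ∂(arcsineMeasure (A i) (B i)), Real.log (g i t) =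
      (if v i t = 0 then (0 : ℝ) else 1) * ((1 / 2) * Real.log (v i t) - (1 / 2) *
        US A B (Finset.univ.erase i) (fun j s => Real.log (g j s)) (t : ℂ)) := by
  obtain ⟨h0, h1, h2, h3⟩ := h
  filter_upwards [h3 i, arc_ae_mem (A i) (B i)] with t ht hm
  simp only [h2] at ht
  rw [prod_Omega hAB hdisj g hm] at ht
  split_ifs with hv
  · rw [hv] at ht
    have : g i t = 0 := by
      rcases mul_eq_zero.1 ht with h | h
      · exact pow_eq_zero_iff (two_ne_zero) |>.1 h
      · exact absurd h (Real.exp_pos _).ne'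
    rw [this, Real.log_zero, zero_mul]
  · have hg : g i t ≠ 0 := by
      intro h; rw [h] at ht; apply hv; rw [← ht]; ring
    rw [← ht, Real.log_mul (pow_ne_zero _ hg) (Real.exp_pos _).ne', Real.log_pow, Real.log_exp]
    push_cast; ring

lemma sol_unique (hAB : ∀ i, A i < B i)
    (hdisj : ∀ i j, i ≠ j → Disjoint (Set.Icc (A i) (B i)) (Set.Icc (A j) (B j)))
    {v : Fin d → ℝ → ℝ} {g g' : Fin d → ℝ → ℝ} {S S' : Fin d → ℂ → ℂ}
    (h : IsSzegoVector d A B v g S) (h' : IsSzegoVector d A B v g' S') (i : Fin d) : S i = S' i := by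
  have key := core (u := fun i t => Real.log (g i t) - Real.log (g' i t))
    (θ := fun i t => if v i t = 0 then (0 : ℝ) else 1) hAB hdisj
    (fun i => (h.2.1 i).sub (h'.2.1 i)) (fun i t => by split_ifs <;> norm_num)
    (fun i t => by split_ifs <;> norm_num) (fun i => by
      filter_upwards [sol_log hAB hdisj h i, sol_log hAB hdisj h' i, arc_ae_mem (A i) (B i)]
        with t h1 h2 hm
      have hD := mem_slitD.1 (mem_slitD_erase hdisj hm)
      have e : US A B (Finset.univ.erase i) (fun i t => Real.log (g i t) - Real.log (g' i t)) (t : ℂ)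
          = US A B (Finset.univ.erase i) (fun i t => Real.log (g i t)) (t : ℂ) -
            US A B (Finset.univ.erase i) (fun i t => Real.log (g' i t)) (t : ℂ) := by
        unfold US
        rw [← Finset.sum_sub_distrib]
        exact Finset.sum_congr rfl fun j hj => harm_sub (hAB j) (h.2.1 j) (h'.2.1 j) (hD j hj)
      rw [e, h1, h2]; ring) i
  rw [h.2.2.1 i, h'.2.2.1 i]
  funext z
  unfold OmegaFun cauchyT
  congr 2
  apply integral_congr_ae
  filter_upwards [key] with t ht
  rw [sub_eq_zero.1 ht]

lemma sol_exists (hAB : ∀ i, A i < B i)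
    (hdisj : ∀ i j, i ≠ j → Disjoint (Set.Icc (A i) (B i)) (Set.Icc (A j) (B j)))
    {v : Fin d → ℝ → ℝ} (hv0 : ∀ i t, 0 ≤ v i t) (hvm : ∀ i, Measurable (v i))
    (hvi : ∀ i, Integrable (fun t => Real.log (v i t)) (arcsineMeasure (A i) (B i))) :
    ∃ (S : Fin d → ℂ → ℂ) (g : Fin d → ℝ → ℝ), IsSzegoVector d A B v g S := by
  obtain ⟨x, hx1, hx2⟩ := exists_fixed (θ := fun i t => if v i t = 0 then (0 : ℝ) else 1)
    (w := fun i t => (1 / 2) * Real.log (v i t)) hAB hdisj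
    (fun i => Measurable.ite (hvm i (measurableSet_singleton 0)) measurable_const measurable_const)
    (fun i t => by split_ifs <;> norm_num)
    (fun i t => by split_ifs <;> norm_num) (fun i => (hvi i).const_mul _)
  set u : Fin d → ℝ → ℝ := fun i t => (1 / 2) * Real.log (v i t) +
    -(1 / 2) * ((if v i t = 0 then (0 : ℝ) else 1) * x i t) with hu
  set g : Fin d → ℝ → ℝ := fun i t => if v i t = 0 then (0 : ℝ) else Real.exp (u i t) with hg
  have hlog : ∀ i t, Real.log (g i t) = u i t := by
    intro i t
    simp only [hg, hu]
    split_ifs with h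
    · rw [h]; simp
    · rw [Real.log_exp]
  refine ⟨fun i z => OmegaFun (A i) (B i) (g i) z, g, ?_, ?_, fun i => rfl, ?_⟩
  · intro i t
    simp only [hg]
    split_ifs
    · exact le_rfl
    · exact (Real.exp_pos _).le
  · intro i
    simp only [hlog]
    exact hx1 i
  · intro i
    filter_upwards [arc_ae_mem (A i) (B i)] with t ht
    rw [prod_Omega hAB hdisj g ht]
    simp only [hlog]
    have e : x i t = US A B (Finset.univ.erase i) (fun j s => u j s) (t : ℂ) := hx2 i t ht
    rw [← e]
    by_cases h : v i t = 0
    · simp [hg, h]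
    · simp only [hg, hu, h, if_false]
      have hp : 0 < v i t := lt_of_le_of_ne (hv0 i t) (Ne.symm h)
      rw [← Real.exp_nat_mul, ← Real.exp_add]
      rw [show ((2 : ℕ) : ℝ) * (1 / 2 * Real.log (v i t) + -(1 / 2) * (1 * x i t)) + x i t =
        Real.log (v i t) by push_cast; ring, Real.exp_log hp]

end

/-- Proposition 3.1: existence and uniqueness of the vector of
conjugate-symmetric outer Szegő functions `(S_1,…,S_d)`, positive at infinity, satisfying
`|S_{i±}(x)|² ∏_{j≠i} S_j(x) = v_{Δ_i}(x)` a.e. on `Δ_i` for each `i`. -/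
theorem szego_vector_exists_unique
    (d : ℕ) (hd : 1 ≤ d) (A B : Fin d → ℝ) (hAB : ∀ i, A i < B i)
    (hdisj : ∀ i j, i ≠ j → Disjoint (Set.Icc (A i) (B i)) (Set.Icc (A j) (B j)))
    (μ : Fin d → Measure ℝ)
    (hfin : ∀ i, IsFiniteMeasure (μ i))
    (hbdd : ∀ i, Bornology.IsBounded (msupp (μ i)))
    (hsub : ∀ i, Set.Icc (A i) (B i) ⊆ convHullSupp (μ i))
    (hSz : ∀ i, SzCond (μ i) (A i) (B i)) :
    ∃ (S : Fin d → ℂ → ℂ) (g : Fin d → ℝ → ℝ),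
      IsSzegoVector d A B (fun i => vDens (μ i) (A i) (B i)) g S ∧
      ∀ (S' : Fin d → ℂ → ℂ) (g' : Fin d → ℝ → ℝ),
        IsSzegoVector d A B (fun i => vDens (μ i) (A i) (B i)) g' S' →
        ∀ i, Set.EqOn (S i) (S' i) (Complex.ofReal '' Set.Icc (A i) (B i))ᶜ := by
  obtain ⟨S, g, h⟩ := sol_exists (v := fun i => vDens (μ i) (A i) (B i)) hAB hdisj
    (fun i t => vDens_nonneg _ _ _ _) (fun i => vDens_meas _ _ _)
    (fun i => log_v_int (hAB i) (hSz i))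
  refine ⟨S, g, h, fun S' g' h' i => ?_⟩
  rw [sol_unique hAB hdisj h h' i]
  exact fun z _ => rfl

end
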